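/- arXiv:2212.07974 — 2 statements merged into one kernel-verified Lean document; each statement's English description precedes it below -/
import Mathlib

section
/- Let ρ ∈ (-1, -1/2] and let N_{ρ,β,+} denote the cardinality of the set {x > 0 : φ(ρ, β, -x) = 0}. Then N_{ρ,β,+} = 1 for every β ∈ [-1, 0), and N_{ρ,β,+} = 2 for every β ∈ [2ρ, -1). -/
/-- The Wright function `φ(ρ, β, x) = ∑ x^n / (n! Γ(β + ρ n))`. -/
noncomputable def wright (ρ β x : ℝ) : ℝ :=
  ∑' n : ℕ, x ^ n / ((n.factorial : ℝ) * Real.Gamma (β + ρ * n))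

/-!
Put `a = -ρ` and `c = 1 - β`. By Hankel's formula `X ^ (-c) φ(ρ, β, -X ^ (1 - a))` is, up to the
factor `π`, the integral of `Im (exp (X (exp z - exp (a z)) + c z))` along the line `Im z = π`.
Moving the line to the curve in the strip `0 < Im z < π` on which `exp z - exp (a z)` is real turns
it into a Laplace transform `F_c(X) = ∫ exp (-X B(θ)) m_c(θ) dθ` with `B` increasing. For
`k < c ≤ k + 1` the amplitude `m_c` changes sign exactly `k` times, so `F_c` has at most `k` zeros
by the rule of signs for Laplace transforms.

Conversely, integrating a derivative along the curve gives
`(X ^ (c / a) F_c)' = -((1 - a) / a) X ^ (c / a) F_{c + 1}`. The function `X ^ (c / a) F_c` vanishes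
at `0`, is eventually positive and eventually decreasing, so by Rolle's theorem `F_{c + 1}` has at
least one zero more than `F_c`, and the number of zeros is exactly `k` by induction.
-/

open Set Filter Topology Real MeasureTheory

section Rolle

theorem encard_le_encard_add_one_of_interleaved {α : Type*} [LinearOrder α] {s t : Set α}
    (h : ∀ x ∈ s, ∀ y ∈ s, x < y → ∃ z ∈ t, x < z ∧ z < y) : s.encard ≤ t.encard + 1 := by
  rcases t.finite_or_infinite with ht | ht
  swap
  · simp [ht.encard_eq]
  lift t to Finset α using ht
  refine ENat.forall_natCast_le_iff_le.1 fun n hn ↦ ?_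
  obtain ⟨u, hus, hu⟩ := exists_subset_encard_eq hn
  lift u to Finset α using finite_of_encard_eq_coe hu
  rw [encard_coe_eq_coe_finsetCard] at hu ⊢
  rw [← hu]
  norm_cast
  exact Finset.card_le_of_interleaved fun x hx y hy hxy _ ↦ h x (hus hx) y (hus hy) hxy

variable {a : ℝ} {f f' : ℝ → ℝ}

theorem encard_zeros_le_encard_deriv_zeros_add_one (hf : ∀ x > a, HasDerivAt f (f' x) x) :
    {x | a < x ∧ f x = 0}.encard ≤ {x | a < x ∧ f' x = 0}.encard + 1 := by
  refine encard_le_encard_add_one_of_interleaved fun x hx y hy hxy ↦ ?_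
  obtain ⟨z, hz, hfz⟩ := exists_hasDerivAt_eq_zero hxy
    (fun u hu ↦ (hf u (hx.1.trans_le hu.1)).continuousAt.continuousWithinAt)
    (hx.2.trans hy.2.symm) (fun u hu ↦ hf u (hx.1.trans hu.1))
  exact ⟨z, ⟨hx.1.trans hz.1, hfz⟩, hz⟩

theorem exists_deriv_zero_gt (hf : ∀ x > a, HasDerivAt f (f' x) x)
    (ha : Tendsto f (𝓝[>] a) (𝓝 0)) (hpos : ∀ᶠ x in atTop, 0 < f x)
    (hneg : ∀ᶠ x in atTop, f' x < 0) : ∃ ζ > a, f' ζ = 0 := by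
  obtain ⟨y, ⟨hfy, hf'y⟩, hay⟩ := ((hpos.and hneg).and (eventually_gt_atTop a)).exists
  obtain ⟨x, ⟨hax, hxy⟩, hslope⟩ := exists_ratio_hasDerivAt_eq_ratio_slope' f f' hay id 1
    (fun x hx ↦ hf x hx.1) (fun x _ ↦ hasDerivAt_id x) ha
    continuous_id.continuousWithinAt
    (hf y hay).continuousAt.continuousWithinAt continuous_id.continuousWithinAt
  have hf'x : 0 < f' x := by
    simp only [id_eq, sub_zero, Pi.one_apply, mul_one] at hslope
    exact pos_of_mul_pos_right (hslope ▸ hfy) (sub_pos.2 hay).le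
  obtain ⟨ζ, hζ, hf'ζ⟩ := exists_hasDerivWithinAt_eq_of_lt_of_gt (f := f) (f' := f') hxy.le
    (fun u hu ↦ (hf u (hax.trans_le hu.1)).hasDerivWithinAt) hf'x hf'y
  exact ⟨ζ, hax.trans hζ.1, hf'ζ⟩

theorem encard_zeros_add_one_le_encard_deriv_zeros (hf : ∀ x > a, HasDerivAt f (f' x) x)
    (ha : Tendsto f (𝓝[>] a) (𝓝 0)) (hpos : ∀ᶠ x in atTop, 0 < f x)
    (hneg : ∀ᶠ x in atTop, f' x < 0) :
    {x | a < x ∧ f x = 0}.encard + 1 ≤ {x | a < x ∧ f' x = 0}.encard := by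
  set Z := {x | a < x ∧ f x = 0}
  rcases Z.finite_or_infinite with hZ | hZ
  swap
  · have htop := hZ.encard_eq.symm.trans_le (encard_zeros_le_encard_deriv_zeros_add_one hf)
    rw [(ENat.add_eq_top.1 (top_le_iff.1 htop)).resolve_right ENat.one_ne_top]
    exact le_top
  have hlim : ∀ x ∈ insert a Z, Tendsto f (𝓝[>] x) (𝓝 0) := by
    rintro x (rfl | ⟨hax, hfx⟩)
    · exact ha
    · exact hfx ▸ (hf x hax).continuousAt.continuousWithinAt
  have hle : ∀ x ∈ insert a Z, a ≤ x := by
    rintro x (rfl | hx)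
    exacts [le_rfl, hx.1.le]
  obtain ⟨M, hM, hmax⟩ := (hZ.insert a).exists_maximal ⟨a, mem_insert a Z⟩
  replace hmax : ∀ x ∈ insert a Z, x ≤ M := fun x hx ↦ (le_total x M).elim id (hmax hx)
  obtain ⟨ζ, hMζ, hζ⟩ := exists_deriv_zero_gt (fun x hx ↦ hf x ((hle M hM).trans_lt hx))
    (hlim M hM) hpos hneg
  rw [← encard_insert_of_notMem (s := Z) (a := a) fun h ↦ lt_irrefl a h.1,
    ← encard_sdiff_singleton_add_one (s := {x | a < x ∧ f' x = 0}) ⟨(hle M hM).trans_lt hMζ, hζ⟩]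
  refine encard_le_encard_add_one_of_interleaved fun x hx y hy hxy ↦ ?_
  have hay : a < y := (hle x hx).trans_lt hxy
  have hfy : f y = 0 := hy.elim (fun h ↦ absurd h hay.ne') And.right
  obtain ⟨z, hz, hfz⟩ := exists_hasDerivAt_eq_zero' hxy (hlim x hx)
    (hfy ▸ (hf y hay).continuousAt.continuousWithinAt)
    (fun u hu ↦ hf u ((hle x hx).trans_lt hu.1))
  exact ⟨z, ⟨⟨(hle x hx).trans_lt hz.1, hfz⟩, (hz.2.trans_le ((hmax y hy).trans hMζ.le)).ne⟩, hz⟩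

end Rolle

section Laplace

variable {α : Type*} [MeasurableSpace α] {μ : Measure α} {B m : α → ℝ} {b t : ℝ}

/-- The Laplace-type integral `∫ exp (-t B) m dμ` with phase `B` and signed amplitude `m`. -/
noncomputable def laplaceIntegral (μ : Measure α) (B m : α → ℝ) (t : ℝ) : ℝ :=
  ∫ x, exp (-(t * B x)) * m x ∂μ

/-- Absolute convergence of `laplaceIntegral μ B m t` for every positive `t`. -/
def LaplaceIntegrable (μ : Measure α) (B m : α → ℝ) : Prop :=
  ∀ t > 0, Integrable (fun x ↦ exp (-(t * B x)) * m x) μ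

theorem exp_neg_mul_le_add_of_mem_Icc {r s t y : ℝ} (ht : t ∈ Icc r s) :
    exp (-(t * y)) ≤ exp (-(r * y)) + exp (-(s * y)) := by
  rcases le_total 0 y with hy | hy
  · refine le_add_of_le_of_nonneg (exp_le_exp.2 ?_) (exp_pos _).le
    nlinarith [mul_le_mul_of_nonneg_right ht.1 hy]
  · refine le_add_of_nonneg_of_le (exp_pos _).le (exp_le_exp.2 ?_)
    nlinarith [mul_le_mul_of_nonpos_right ht.2 hy]

theorem abs_mul_exp_neg_mul_le {t : ℝ} (ht : 0 < t) (y : ℝ) :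
    |y| * exp (-(t * y)) ≤ 2 / t * (exp (-(t / 2 * y)) + exp (-(3 * t / 2 * y))) := by
  have habs : t / 2 * |y| ≤ exp (t / 2 * y) + exp (-(t / 2 * y)) := by
    rw [← abs_of_pos (half_pos ht), ← abs_mul, abs_of_pos (half_pos ht)]
    exact ((lt_add_one _).le.trans (add_one_le_exp _)).trans (exp_abs_le _)
  calc |y| * exp (-(t * y)) = 2 / t * (t / 2 * |y| * exp (-(t * y))) := by field_simp
    _ ≤ 2 / t * ((exp (t / 2 * y) + exp (-(t / 2 * y))) * exp (-(t * y))) := by gcongr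
    _ = 2 / t * (exp (-(t / 2 * y)) + exp (-(3 * t / 2 * y))) := by
      rw [add_mul, ← exp_add, ← exp_add]; ring_nf

theorem mul_max_zero_mul_sub_abs_le_exp_mul {s y w : ℝ} (hs : 0 ≤ s) (hw : 0 < y → 0 ≤ w) :
    s * (max y 0 * w) - |w| ≤ exp (s * y) * w := by
  rcases lt_or_ge 0 y with hy | hy
  · rw [max_eq_left hy.le, abs_of_nonneg (hw hy)]
    nlinarith [mul_le_mul_of_nonneg_right (add_one_le_exp (s * y)) (hw hy), hw hy]
  · have hexp : exp (s * y) ≤ 1 := exp_le_one_iff.2 (mul_nonpos_of_nonneg_of_nonpos hs hy)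
    rw [max_eq_right hy, zero_mul, mul_zero, zero_sub]
    nlinarith [neg_abs_le w, exp_pos (s * y),
      mul_le_mul_of_nonneg_left (neg_abs_le w) (exp_pos (s * y)).le,
      mul_le_mul_of_nonneg_right hexp (abs_nonneg w)]

namespace LaplaceIntegrable

theorem mul_phase (h : LaplaceIntegrable μ B m) (hB : AEStronglyMeasurable B μ) :
    LaplaceIntegrable μ B fun x ↦ B x * m x := fun t ht ↦ by
  have hdom := ((h (t / 2) (by positivity)).norm.add
    (h (3 * t / 2) (by positivity)).norm).const_mul (2 / t)
  refine (hdom.mono' (hB.mul (h t ht).1) (ae_of_all _ fun x ↦ ?_)).congr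
    (ae_of_all _ fun x ↦ mul_left_comm _ _ _)
  calc ‖B x * (exp (-(t * B x)) * m x)‖ = |B x| * exp (-(t * B x)) * |m x| := by
        rw [norm_mul, norm_mul, norm_eq_abs, norm_eq_abs, norm_eq_abs, abs_exp, mul_assoc]
    _ ≤ 2 / t * (exp (-(t / 2 * B x)) + exp (-(3 * t / 2 * B x))) * |m x| :=
        mul_le_mul_of_nonneg_right (abs_mul_exp_neg_mul_le ht _) (abs_nonneg _)
    _ = _ := by
        simp only [Pi.add_apply, norm_mul, norm_eq_abs, abs_exp]; ring

theorem sub_phase_mul (h : LaplaceIntegrable μ B m) (hB : AEStronglyMeasurable B μ) (b : ℝ) :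
    LaplaceIntegrable μ B fun x ↦ (b - B x) * m x := fun t ht ↦
  (((h t ht).const_mul b).sub (h.mul_phase hB t ht)).congr
    (ae_of_all _ fun x ↦ by simp only [Pi.sub_apply]; ring)

theorem hasDerivAt_laplaceIntegral (h : LaplaceIntegrable μ B m)
    (hB : AEStronglyMeasurable B μ) (ht : 0 < t) :
    HasDerivAt (laplaceIntegral μ B m) (-laplaceIntegral μ B (fun x ↦ B x * m x) t) t := by
  have hBm := h.mul_phase hB
  have hnhds : Ioo (t / 2) (3 * t / 2) ∈ 𝓝 t := Ioo_mem_nhds (by linarith) (by linarith)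
  have hderiv := hasDerivAt_integral_of_dominated_loc_of_deriv_le (μ := μ)
    (F := fun s x ↦ exp (-(s * B x)) * m x) (F' := fun s x ↦ -(exp (-(s * B x)) * (B x * m x)))
    hnhds
    ((eventually_gt_nhds ht).mono fun s hs ↦ (h s hs).1) (h t ht) (hBm t ht).neg.1
    (ae_of_all _ fun x s hs ↦ ?_)
    ((hBm (t / 2) (by positivity)).norm.add (hBm (3 * t / 2) (by positivity)).norm)
    (ae_of_all _ fun x s _ ↦ ?_)
  · rw [laplaceIntegral, ← integral_neg]
    exact hderiv.2
  · simp only [Pi.add_apply, norm_neg, norm_mul, norm_eq_abs, abs_exp, ← add_mul]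
    gcongr
    exact exp_neg_mul_le_add_of_mem_Icc (Ioo_subset_Icc_self hs)
  · exact ((hasDerivAt_mul_const (B x)).neg.exp.mul_const (m x)).congr_deriv
      (by simp only [Pi.neg_apply]; ring)

/-- **Descartes' rule of signs**, by induction on the number of sign changes: differentiating
`exp (t b) ∫ exp (-t B) m` multiplies the amplitude by `b - B`. -/
theorem encard_zeros_le {ι : Type*} {s : Finset ι} {b : ι → ℝ} [NeZero μ]
    (h : LaplaceIntegrable μ B m) (hB : AEStronglyMeasurable B μ)
    (hsign : ∀ᵐ x ∂μ, 0 < m x * ∏ i ∈ s, (b i - B x)) :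
    {t | 0 < t ∧ laplaceIntegral μ B m t = 0}.encard ≤ s.card := by
  classical
  induction s using Finset.induction_on generalizing m with
  | empty =>
    simp only [Finset.prod_empty, mul_one] at hsign
    have hpos : ∀ t > 0, 0 < laplaceIntegral μ B m t := fun t ht ↦ by
      refine (integral_pos_iff_support_of_nonneg_ae ?_ (h t ht)).2 ?_
      · filter_upwards [hsign] with x hx using (mul_pos (exp_pos _) hx).le
      · rw [pos_iff_ne_zero, Ne, measure_eq_zero_iff_ae_notMem]
        intro hzero
        obtain ⟨x, hx, hmx⟩ := (hzero.and hsign).exists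
        exact hx (mul_pos (exp_pos _) hmx).ne'
    rw [Finset.card_empty, Nat.cast_zero, nonpos_iff_eq_zero, encard_eq_zero]
    exact eq_empty_of_forall_notMem fun t ht ↦ (hpos t ht.1).ne' ht.2
  | insert i s hi ih =>
    have hrec := ih (h.sub_phase_mul hB (b i)) <| hsign.mono fun x hx ↦ by
      rwa [Finset.prod_insert hi, ← mul_assoc, mul_comm (m x)] at hx
    have hderiv : ∀ t > 0, HasDerivAt (fun t ↦ exp (t * b i) * laplaceIntegral μ B m t)
        (exp (t * b i) * laplaceIntegral μ B (fun x ↦ (b i - B x) * m x) t) t := fun t ht ↦ by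
      refine ((hasDerivAt_mul_const (b i)).exp.mul
        (h.hasDerivAt_laplaceIntegral hB ht)).congr_deriv ?_
      have hsub : laplaceIntegral μ B (fun x ↦ (b i - B x) * m x) t =
          b i * laplaceIntegral μ B m t - laplaceIntegral μ B (fun x ↦ B x * m x) t := by
        simp only [laplaceIntegral]
        rw [← integral_const_mul, ← integral_sub ((h t ht).const_mul _) (h.mul_phase hB t ht)]
        exact integral_congr_ae (ae_of_all _ fun x ↦ by ring)
      rw [hsub]; ring
    have hrolle := encard_zeros_le_encard_deriv_zeros_add_one hderiv
    simp only [mul_eq_zero, exp_ne_zero, false_or] at hrolle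
    rw [Finset.card_insert_of_notMem hi, Nat.cast_add, Nat.cast_one]
    exact hrolle.trans (by gcongr)

theorem eventually_laplaceIntegral_pos (h : LaplaceIntegrable μ B m)
    (hB : AEStronglyMeasurable B μ) (hnonneg : ∀ᵐ x ∂μ, B x < b → 0 ≤ m x)
    (hpos : 0 < μ {x | B x < b ∧ 0 < m x}) : ∀ᶠ t in atTop, 0 < laplaceIntegral μ B m t := by
  set w : α → ℝ := fun x ↦ exp (-(1 * B x)) * m x
  have hw : Integrable w μ := h 1 one_pos
  have hwpos : Integrable (fun x ↦ max (b - B x) 0 * w x) μ := by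
    refine (h.sub_phase_mul hB b 1 one_pos).mono
      (((aestronglyMeasurable_const.sub hB).sup aestronglyMeasurable_const).mul hw.1)
      (ae_of_all _ fun x ↦ ?_)
    calc ‖max (b - B x) 0 * w x‖ ≤ ‖b - B x‖ * ‖w x‖ := by
          rw [norm_mul]
          gcongr
          simpa using abs_max_le_max_abs_abs (a := b - B x) (b := 0)
      _ = ‖exp (-(1 * B x)) * ((b - B x) * m x)‖ := by rw [← norm_mul, mul_left_comm]
  have hI : 0 < ∫ x, max (b - B x) 0 * w x ∂μ := by
    refine (integral_pos_iff_support_of_nonneg_ae ?_ hwpos).2 (hpos.trans_le (measure_mono ?_))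
    · filter_upwards [hnonneg] with x hx
      rcases lt_or_ge (B x) b with hlt | hge
      · exact mul_nonneg (le_max_right _ _) (mul_nonneg (exp_pos _).le (hx hlt))
      · simp [max_eq_right (sub_nonpos.2 hge)]
    · rintro x ⟨hlt, hm⟩
      exact (mul_pos (lt_max_of_lt_left (sub_pos.2 hlt)) (mul_pos (exp_pos _) hm)).ne'
  filter_upwards [eventually_gt_atTop (1 + (∫ x, |w x| ∂μ) / ∫ x, max (b - B x) 0 * w x ∂μ),
    eventually_gt_atTop 1] with t ht ht1
  refine pos_of_mul_pos_right ?_ (exp_pos ((t - 1) * b)).le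
  calc 0 < (t - 1) * (∫ x, max (b - B x) 0 * w x ∂μ) - ∫ x, |w x| ∂μ :=
        sub_pos.2 ((div_lt_iff₀ hI).1 (lt_sub_iff_add_lt'.2 ht))
    _ = ∫ x, ((t - 1) * (max (b - B x) 0 * w x) - |w x|) ∂μ := by
        rw [integral_sub (hwpos.const_mul _) hw.abs, integral_const_mul]
    _ ≤ ∫ x, exp ((t - 1) * b) * (exp (-(t * B x)) * m x) ∂μ := by
        refine integral_mono_ae ((hwpos.const_mul _).sub hw.abs)
          ((h t (one_pos.trans ht1)).const_mul _) ?_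
        filter_upwards [hnonneg] with x hx
        have hexp : exp ((t - 1) * b) * (exp (-(t * B x)) * m x) =
            exp ((t - 1) * (b - B x)) * w x := by
          simp only [w, ← mul_assoc, ← exp_add]; ring_nf
        rw [hexp]
        exact mul_max_zero_mul_sub_abs_le_exp_mul (sub_pos.2 ht1).le fun hy ↦
          mul_nonneg (exp_pos _).le (hx (sub_pos.1 hy))
    _ = exp ((t - 1) * b) * laplaceIntegral μ B m t := integral_const_mul _ _

end LaplaceIntegrable

end Laplace

section Cotangent

theorem hasDerivAt_real_cot {x : ℝ} (hx : sin x ≠ 0) : HasDerivAt cot (-(1 + cot x ^ 2)) x := by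
  have hcot : cot = fun y ↦ cos y / sin y := funext cot_eq_cos_div_sin
  rw [hcot]
  refine ((hasDerivAt_cos x).div (hasDerivAt_sin x) hx).congr_deriv ?_
  field_simp
  ring

theorem one_add_cot_sq {x : ℝ} (hx : sin x ≠ 0) : 1 + cot x ^ 2 = 1 / sin x ^ 2 := by
  rw [cot_eq_cos_div_sin]
  field_simp
  rw [sin_sq_add_cos_sq]

theorem cot_sub_cot {x y : ℝ} (hx : sin x ≠ 0) (hy : sin y ≠ 0) :
    cot x - cot y = sin (y - x) / (sin x * sin y) := by
  rw [cot_eq_cos_div_sin, cot_eq_cos_div_sin, sin_sub]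
  field_simp

theorem strictAntiOn_mul_cot : StrictAntiOn (fun x ↦ x * cot x) (Ioo 0 π) := by
  have hderiv : ∀ x ∈ Ioo 0 π, HasDerivAt (fun x ↦ x * cot x)
      (cot x - x * (1 + cot x ^ 2)) x := fun x hx ↦
    ((hasDerivAt_id x).mul (hasDerivAt_real_cot (sin_pos_of_mem_Ioo hx).ne')).congr_deriv
      (by simp only [id_eq]; ring)
  refine strictAntiOn_of_deriv_neg (convex_Ioo 0 π)
    (fun x hx ↦ (hderiv x hx).continuousAt.continuousWithinAt) fun x hx ↦ ?_
  rw [interior_Ioo] at hx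
  have hsin := sin_pos_of_mem_Ioo hx
  have hlt : sin x * cos x < x := by
    linarith [sin_lt (mul_pos two_pos hx.1), sin_two_mul x]
  rw [(hderiv x hx).deriv, one_add_cot_sq hsin.ne', cot_eq_cos_div_sin, sub_neg,
    mul_one_div, div_lt_div_iff₀ hsin (pow_pos hsin 2)]
  nlinarith

end Cotangent

section DescentCurve

variable {a c θ : ℝ}

/-- The real part `ℓ(θ)` of the point with imaginary part `θ ∈ (0, π)` on the curve on which
`exp z - exp (a z)` is real; along it `exp (X (exp z - exp (a z)))` does not oscillate. -/
noncomputable def descentRe (a θ : ℝ) : ℝ := (log (sin (a * θ)) - log (sin θ)) / (1 - a)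

/-- The derivative of `descentRe a`. -/
noncomputable def descentSlope (a θ : ℝ) : ℝ := (a * cot (a * θ) - cot θ) / (1 - a)

/-- The value of `exp (a z) - exp z` at the point of the curve with imaginary part `θ`. -/
noncomputable def descentDepth (a θ : ℝ) : ℝ :=
  exp (descentRe a θ) * sin ((1 - a) * θ) / sin (a * θ)

/-- The imaginary part of `exp (c z) dz` along the curve, parametrized by `θ`. -/
noncomputable def descentAmplitude (a c θ : ℝ) : ℝ :=
  exp (c * descentRe a θ) * (descentSlope a θ * sin (c * θ) + cos (c * θ))

/-- The angle whose cosine carries the sign of `descentAmplitude a c θ`. -/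
noncomputable def descentPhase (a c θ : ℝ) : ℝ := c * θ - arctan (descentSlope a θ)

theorem mul_mem_Ioo_zero_pi (ha : a ∈ Ioo 0 1) (hθ : θ ∈ Ioo 0 π) : a * θ ∈ Ioo 0 π :=
  ⟨mul_pos ha.1 hθ.1, (mul_lt_of_lt_one_left hθ.1 ha.2).trans hθ.2⟩

theorem one_sub_mem_Ioo (ha : a ∈ Ioo (0 : ℝ) 1) : 1 - a ∈ Ioo 0 1 :=
  ⟨sub_pos.2 ha.2, sub_lt_self 1 ha.1⟩

theorem sin_mul_pos (ha : a ∈ Ioo 0 1) (hθ : θ ∈ Ioo 0 π) : 0 < sin (a * θ) :=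
  sin_pos_of_mem_Ioo (mul_mem_Ioo_zero_pi ha hθ)

theorem descentSlope_pos (ha : a ∈ Ioo 0 1) (hθ : θ ∈ Ioo 0 π) : 0 < descentSlope a θ := by
  have hanti := strictAntiOn_mul_cot (mul_mem_Ioo_zero_pi ha hθ) hθ
    (mul_lt_of_lt_one_left hθ.1 ha.2)
  refine div_pos (sub_pos.2 (lt_of_mul_lt_mul_left ?_ hθ.1.le)) (sub_pos.2 ha.2)
  linarith

theorem hasDerivAt_descentRe (ha : a ∈ Ioo 0 1) (hθ : θ ∈ Ioo 0 π) :
    HasDerivAt (descentRe a) (descentSlope a θ) θ := by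
  refine ((((hasDerivAt_const_mul a).sin.log (sin_mul_pos ha hθ).ne').sub
    ((hasDerivAt_sin θ).log (sin_pos_of_mem_Ioo hθ).ne')).div_const (1 - a)).congr_deriv ?_
  rw [descentSlope, cot_eq_cos_div_sin, cot_eq_cos_div_sin]
  ring

theorem strictMonoOn_descentRe (ha : a ∈ Ioo 0 1) : StrictMonoOn (descentRe a) (Ioo 0 π) := by
  refine strictMonoOn_of_deriv_pos (convex_Ioo 0 π)
    (fun θ hθ ↦ (hasDerivAt_descentRe ha hθ).continuousAt.continuousWithinAt) fun θ hθ ↦ ?_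
  rw [interior_Ioo] at hθ
  exact (hasDerivAt_descentRe ha hθ).deriv ▸ descentSlope_pos ha hθ

theorem tendsto_descentRe_atTop (ha : a ∈ Ioo 0 1) :
    Tendsto (descentRe a) (𝓝[<] π) atTop := by
  have haπ : 0 < sin (a * π) :=
    sin_pos_of_pos_of_lt_pi (mul_pos ha.1 pi_pos) (mul_lt_of_lt_one_left pi_pos ha.2)
  have hnum : Tendsto (fun θ ↦ log (sin (a * θ))) (𝓝[<] π) (𝓝 (log (sin (a * π)))) :=
    ((continuous_sin.comp (continuous_const_mul a)).continuousAt.log haπ.ne').mono_left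
      nhdsWithin_le_nhds
  have hsin : Tendsto sin (𝓝[<] π) (𝓝[>] 0) := by
    refine tendsto_nhdsWithin_iff.2
      ⟨sin_pi ▸ continuous_sin.continuousAt.mono_left nhdsWithin_le_nhds, ?_⟩
    filter_upwards [Ioo_mem_nhdsLT pi_pos] with θ hθ using sin_pos_of_mem_Ioo hθ
  refine Tendsto.atTop_div_const (sub_pos.2 ha.2) ?_
  simp only [sub_eq_add_neg]
  exact hnum.add_atTop (tendsto_neg_atBot_atTop.comp (tendsto_log_nhdsGT_zero.comp hsin))

theorem exp_mul_descentRe_mul_sin (ha : a ∈ Ioo 0 1) (hθ : θ ∈ Ioo 0 π) :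
    exp (a * descentRe a θ) * sin (a * θ) = exp (descentRe a θ) * sin θ := by
  have hmul : (1 - a) * descentRe a θ = log (sin (a * θ)) - log (sin θ) :=
    mul_div_cancel₀ _ (sub_pos.2 ha.2).ne'
  rw [← exp_log (sin_mul_pos ha hθ), ← exp_log (sin_pos_of_mem_Ioo hθ), ← exp_add, ← exp_add]
  congr 1
  linarith

theorem descentDepth_eq_exp (ha : a ∈ Ioo 0 1) (hθ : θ ∈ Ioo 0 π) :
    descentDepth a θ = exp (a * (descentRe a θ + descentRe (1 - a) θ)) := by
  have hsin := sin_mul_pos ha hθ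
  have hexp : exp (a * descentRe (1 - a) θ) = sin ((1 - a) * θ) / sin θ := by
    have hmul : a * descentRe (1 - a) θ = log (sin ((1 - a) * θ)) - log (sin θ) := by
      rw [descentRe, sub_sub_cancel]
      exact mul_div_cancel₀ _ ha.1.ne'
    rw [hmul, exp_sub, exp_log (sin_mul_pos (one_sub_mem_Ioo ha) hθ),
      exp_log (sin_pos_of_mem_Ioo hθ)]
  rw [mul_add, exp_add, hexp, descentDepth, div_eq_iff hsin.ne', mul_right_comm,
    exp_mul_descentRe_mul_sin ha hθ]
  have := (sin_pos_of_mem_Ioo hθ).ne'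
  field_simp

theorem strictMonoOn_descentDepth (ha : a ∈ Ioo 0 1) :
    StrictMonoOn (descentDepth a) (Ioo 0 π) := fun x hx y hy hxy ↦ by
  rw [descentDepth_eq_exp ha hx, descentDepth_eq_exp ha hy, exp_lt_exp]
  have ha' := one_sub_mem_Ioo ha
  exact mul_lt_mul_of_pos_left (add_lt_add (strictMonoOn_descentRe ha hx hy hxy)
    (strictMonoOn_descentRe ha' hx hy hxy)) ha.1

/-- A lower bound for the ratio of `descentDepth a θ` to `exp (descentRe a θ)`. -/
noncomputable def depthRatio (a : ℝ) : ℝ := sin ((1 - a) * π) / (a * π)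

theorem depthRatio_pos (ha : a ∈ Ioo 0 1) : 0 < depthRatio a :=
  div_pos (sin_pos_of_pos_of_lt_pi (mul_pos (sub_pos.2 ha.2) pi_pos)
    (mul_lt_of_lt_one_left pi_pos (sub_lt_self 1 ha.1))) (mul_pos ha.1 pi_pos)

theorem depthRatio_mul_exp_le_descentDepth (ha : a ∈ Ioo 0 1) (hθ : θ ∈ Ioo 0 π) :
    depthRatio a * exp (descentRe a θ) ≤ descentDepth a θ := by
  have hsin := sin_mul_pos ha hθ
  have hconcave : θ / π * sin ((1 - a) * π) ≤ sin ((1 - a) * θ) := by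
    have hmem : (1 - a) * π ∈ Icc 0 π :=
      ⟨mul_nonneg (sub_pos.2 ha.2).le pi_pos.le,
        mul_le_of_le_one_left pi_pos.le (sub_lt_self 1 ha.1).le⟩
    have := strictConcaveOn_sin_Icc.concaveOn.2 (left_mem_Icc.2 pi_pos.le) hmem
      (sub_nonneg.2 ((div_le_one pi_pos).2 hθ.2.le)) (div_pos hθ.1 pi_pos).le
      (sub_add_cancel 1 (θ / π))
    simp only [smul_eq_mul, sin_zero, mul_zero, zero_add] at this
    rwa [mul_left_comm, div_mul_cancel₀ _ pi_ne_zero] at this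
  have hle : sin (a * θ) ≤ a * θ := sin_le (mul_pos ha.1 hθ.1).le
  rw [descentDepth, mul_comm, mul_div_assoc]
  refine mul_le_mul_of_nonneg_left ((le_div_iff₀ hsin).2 ?_) (exp_pos _).le
  calc depthRatio a * sin (a * θ) ≤ depthRatio a * (a * θ) :=
        mul_le_mul_of_nonneg_left hle (depthRatio_pos ha).le
    _ = θ / π * sin ((1 - a) * π) := by
        have := ha.1.ne'
        rw [depthRatio]
        field_simp
    _ ≤ sin ((1 - a) * θ) := hconcave

theorem hasDerivAt_descentSlope (ha : a ∈ Ioo 0 1) (hθ : θ ∈ Ioo 0 π) :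
    HasDerivAt (descentSlope a)
      ((1 + cot θ ^ 2 - a ^ 2 * (1 + cot (a * θ) ^ 2)) / (1 - a)) θ := by
  refine (((((hasDerivAt_real_cot (sin_mul_pos ha hθ).ne').comp θ
    (hasDerivAt_const_mul a)).const_mul a).sub
    (hasDerivAt_real_cot (sin_pos_of_mem_Ioo hθ).ne')).div_const (1 - a)).congr_deriv ?_
  ring

theorem one_sub_div_sin_le_cot_sub_cot (ha : a ∈ Ioo 0 1) (hθ : θ ∈ Ioo 0 π) :
    (1 - a) / sin (a * θ) ≤ cot (a * θ) - cot θ := by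
  have hsin := sin_pos_of_mem_Ioo hθ
  have hsina := sin_mul_pos ha hθ
  have hconcave : (1 - a) * sin θ ≤ sin ((1 - a) * θ) := by
    simpa using strictConcaveOn_sin_Icc.concaveOn.2 (left_mem_Icc.2 pi_pos.le)
      (Ioo_subset_Icc_self hθ) ha.1.le (sub_pos.2 ha.2).le (add_sub_cancel a 1)
  rw [cot_sub_cot hsina.ne' hsin.ne', div_le_div_iff₀ hsina (mul_pos hsina hsin),
    ← one_sub_mul]
  nlinarith

theorem deriv_descentSlope_le (ha : a ∈ Ioo 0 1) (hθ : θ ∈ Ioo 0 π) :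
    (1 + cot θ ^ 2 - a ^ 2 * (1 + cot (a * θ) ^ 2)) / (1 - a) ≤ 1 + descentSlope a θ ^ 2 := by
  have h1a := sub_pos.2 ha.2
  have hsq : (1 - a) ^ 2 * (1 + cot (a * θ) ^ 2) ≤ (cot (a * θ) - cot θ) ^ 2 := by
    rw [one_add_cot_sq (sin_mul_pos ha hθ).ne', mul_one_div, ← div_pow]
    exact pow_le_pow_left₀ (div_pos h1a (sin_mul_pos ha hθ)).le
      (one_sub_div_sin_le_cot_sub_cot ha hθ) 2
  have hid : 1 + descentSlope a θ ^ 2 -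
      (1 + cot θ ^ 2 - a ^ 2 * (1 + cot (a * θ) ^ 2)) / (1 - a) =
      a * ((cot (a * θ) - cot θ) ^ 2 - (1 - a) ^ 2 * (1 + cot (a * θ) ^ 2)) / (1 - a) ^ 2 := by
    rw [descentSlope]
    field_simp
    ring
  rw [← sub_nonneg, hid]
  exact div_nonneg (mul_nonneg ha.1.le (sub_nonneg.2 hsq)) (sq_nonneg _)

theorem continuousOn_descentPhase (ha : a ∈ Ioo 0 1) :
    ContinuousOn (descentPhase a c) (Ioo 0 π) := fun _ hθ ↦
  ((hasDerivAt_const_mul c).sub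
    (hasDerivAt_descentSlope ha hθ).arctan).continuousAt.continuousWithinAt

theorem strictMonoOn_descentPhase (ha : a ∈ Ioo 0 1) (hc : 1 < c) :
    StrictMonoOn (descentPhase a c) (Ioo 0 π) := by
  refine strictMonoOn_of_deriv_pos (convex_Ioo 0 π) (continuousOn_descentPhase ha) fun θ hθ ↦ ?_
  rw [interior_Ioo] at hθ
  have hderiv : HasDerivAt (descentPhase a c) _ θ :=
    (hasDerivAt_const_mul c).sub (hasDerivAt_descentSlope ha hθ).arctan
  rw [hderiv.deriv, one_div_mul_eq_div, sub_pos]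
  exact ((div_le_one (by positivity)).2 (deriv_descentSlope_le ha hθ)).trans_lt hc

theorem mul_sub_pi_div_two_lt_descentPhase : c * θ - π / 2 < descentPhase a c θ :=
  sub_lt_sub_left (arctan_lt_pi_div_two _) _

theorem descentPhase_lt_mul (ha : a ∈ Ioo 0 1) (hθ : θ ∈ Ioo 0 π) : descentPhase a c θ < c * θ :=
  sub_lt_self _ (arctan_pos.2 (descentSlope_pos ha hθ))

theorem descentPhase_lt_sub_one_mul_add (ha : a ∈ Ioo 0 1) (hθ : θ ∈ Ioo 0 π) :
    descentPhase a c θ < (c - 1) * θ + π / 2 := by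
  have hcot : cot θ < cot (a * θ) := by
    rw [← sub_pos]
    exact (div_pos (sub_pos.2 ha.2) (sin_mul_pos ha hθ)).trans_le
      (one_sub_div_sin_le_cot_sub_cot ha hθ)
  have hslope : -cot θ < descentSlope a θ := by
    rw [descentSlope, lt_div_iff₀ (sub_pos.2 ha.2)]
    nlinarith [mul_lt_mul_of_pos_left hcot ha.1]
  have harctan : arctan (-cot θ) = θ - π / 2 := by
    rw [← arctan_tan (x := θ - π / 2) (by linarith [hθ.1]) (by linarith [hθ.2]),
      tan_eq_sin_div_cos, sin_sub_pi_div_two, cos_sub_pi_div_two, cot_eq_cos_div_sin, neg_div]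
  have := arctan_strictMono hslope
  rw [descentPhase]
  linarith

theorem exists_descentPhase_eq {v : ℝ} (ha : a ∈ Ioo 0 1)
    (hv : v ∈ Ioo 0 (c * π - π / 2)) : ∃ θ ∈ Ioo 0 π, descentPhase a c θ = v := by
  have hlim_left : Tendsto (fun θ ↦ c * θ) (𝓝[>] 0) (𝓝 0) := by
    simpa using (continuous_const_mul c).continuousWithinAt.tendsto (x := (0 : ℝ)) (s := Ioi 0)
  have hlim_right : Tendsto (fun θ ↦ c * θ - π / 2) (𝓝[<] π) (𝓝 (c * π - π / 2)) :=
    Continuous.continuousWithinAt (by fun_prop)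
  obtain ⟨x, hxv, hx⟩ :=
    ((hlim_left.eventually_lt_const hv.1).and (Ioo_mem_nhdsGT pi_pos)).exists
  obtain ⟨y, hvy, hy⟩ :=
    ((hlim_right.eventually_const_lt hv.2).and (Ioo_mem_nhdsLT pi_pos)).exists
  exact isPreconnected_Ioo.intermediate_value hx hy (continuousOn_descentPhase ha)
    ⟨((descentPhase_lt_mul ha hx).trans hxv).le,
      (hvy.trans mul_sub_pi_div_two_lt_descentPhase).le⟩

theorem descentAmplitude_eq_mul_cos : descentAmplitude a c θ =
    exp (c * descentRe a θ) * √(1 + descentSlope a θ ^ 2) * cos (descentPhase a c θ) := by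
  have : 0 < √(1 + descentSlope a θ ^ 2) := by positivity
  rw [descentAmplitude, descentPhase, cos_sub, cos_arctan, sin_arctan]
  field_simp
  ring

end DescentCurve

section SignPattern

theorem cos_mul_prod_pos {k : ℕ} {y : ℝ} (hy : y ∈ Ioo (-(π / 2)) (π / 2 + k * π))
    (hne : ∀ j < k, y ≠ π / 2 + j * π) :
    0 < cos y * ∏ j ∈ Finset.range k, (π / 2 + j * π - y) := by
  induction k generalizing y with
  | zero =>
    simpa using cos_pos_of_mem_Ioo (by simpa using hy)
  | succ k ih =>
    rcases (hne 0 k.succ_pos).lt_or_gt with hlt | hgt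
    · rw [Nat.cast_zero, zero_mul, add_zero] at hlt
      refine mul_pos (cos_pos_of_mem_Ioo ⟨hy.1, hlt⟩) (Finset.prod_pos fun j _ ↦ ?_)
      have : 0 ≤ j * π := by positivity
      linarith
    · rw [Nat.cast_zero, zero_mul, add_zero] at hgt
      have hlt := hy.2
      push_cast at hlt
      have hshift := ih (y := y - π) ⟨by linarith, by linarith⟩ fun j hj h ↦
        hne (j + 1) (Nat.succ_lt_succ hj) (by push_cast; linarith)
      have hprod : ∏ j ∈ Finset.range k, (π / 2 + (j + 1 : ℕ) * π - y) =
          ∏ j ∈ Finset.range k, (π / 2 + j * π - (y - π)) :=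
        Finset.prod_congr rfl fun j _ ↦ by push_cast; ring
      rw [Finset.prod_range_succ', hprod, Nat.cast_zero]
      rw [cos_sub_pi] at hshift
      nlinarith

variable {a c θ : ℝ}

theorem descentAmplitude_pos (ha : a ∈ Ioo 0 1) (hc : 0 < c) (hθ : θ ∈ Ioo 0 π)
    (hcθ : c * θ ≤ π / 2) : 0 < descentAmplitude a c θ := by
  rw [descentAmplitude_eq_mul_cos]
  have hcos : 0 < cos (descentPhase a c θ) := cos_pos_of_mem_Ioo
    ⟨by linarith [mul_pos hc hθ.1, mul_sub_pi_div_two_lt_descentPhase (a := a) (c := c) (θ := θ)],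
      (descentPhase_lt_mul ha hθ).trans_le hcθ⟩
  positivity

theorem descentPhase_mem_Ioo {k : ℕ} (ha : a ∈ Ioo 0 1) (hc : 0 < c) (hck : c ≤ k + 1)
    (hθ : θ ∈ Ioo 0 π) : descentPhase a c θ ∈ Ioo (-(π / 2)) (π / 2 + k * π) := by
  constructor
  · linarith [mul_pos hc hθ.1, mul_sub_pi_div_two_lt_descentPhase (a := a) (c := c) (θ := θ)]
  · have hle : (c - 1) * θ ≤ k * π :=
      mul_le_mul (by linarith) hθ.2.le hθ.1.le k.cast_nonneg
    linarith [descentPhase_lt_sub_one_mul_add (c := c) ha hθ]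

/-- The sign changes sit at the depths of the points where the phase is `π / 2 + j π`. -/
theorem exists_descentAmplitude_mul_prod_pos {k : ℕ} (ha : a ∈ Ioo 0 1) (hkc : k < c)
    (hck : c ≤ k + 1) :
    ∃ b : ℕ → ℝ, ∀ᵐ θ ∂volume.restrict (Ioo 0 π),
      0 < descentAmplitude a c θ * ∏ j ∈ Finset.range k, (b j - descentDepth a θ) := by
  have hc : 0 < c := k.cast_nonneg.trans_lt hkc
  have hone : ∀ j < k, (j : ℝ) + 1 < c := fun j hj ↦
    (by exact_mod_cast hj : (j : ℝ) + 1 ≤ k).trans_lt hkc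
  have hnode : ∀ j : ℕ, ∃ θ, j < k → θ ∈ Ioo 0 π ∧ descentPhase a c θ = π / 2 + j * π := fun j ↦ by
    by_cases hj : j < k
    · obtain ⟨θ, hθ, hv⟩ := exists_descentPhase_eq (c := c) (v := π / 2 + j * π) ha
        ⟨by positivity, by nlinarith [hone j hj, pi_pos]⟩
      exact ⟨θ, fun _ ↦ ⟨hθ, hv⟩⟩
    · exact ⟨0, fun h ↦ absurd h hj⟩
  choose node hnode using hnode
  refine ⟨fun j ↦ descentDepth a (node j), ?_⟩
  filter_upwards [ae_restrict_mem measurableSet_Ioo,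
    ae_restrict_of_ae (ae_all_iff.2 fun j ↦ Measure.ae_ne volume (node j))] with θ hθ hne
  have hmono : ∀ j < k, StrictMonoOn (descentPhase a c) (Ioo 0 π) := fun j hj ↦
    strictMonoOn_descentPhase ha ((le_add_of_nonneg_left j.cast_nonneg).trans_lt (hone j hj))
  have hcos := cos_mul_prod_pos (descentPhase_mem_Ioo ha hc hck hθ) fun j hj h ↦
    hne j ((hmono j hj).injOn hθ (hnode j hj).1 (h.trans (hnode j hj).2.symm))
  have hagree : 0 < (∏ j ∈ Finset.range k, (π / 2 + j * π - descentPhase a c θ)) *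
      ∏ j ∈ Finset.range k, (descentDepth a (node j) - descentDepth a θ) := by
    rw [← Finset.prod_mul_distrib]
    refine Finset.prod_pos fun j hj ↦ ?_
    obtain ⟨hmem, hphase⟩ := hnode j (Finset.mem_range.1 hj)
    have hψ := hmono j (Finset.mem_range.1 hj)
    have hB := strictMonoOn_descentDepth ha
    rw [← hphase]
    rcases (hne j).lt_or_gt with hlt | hgt
    · exact mul_pos (sub_pos.2 (hψ hθ hmem hlt)) (sub_pos.2 (hB hθ hmem hlt))
    · exact mul_pos_of_neg_of_neg (sub_neg.2 (hψ hmem hθ hgt)) (sub_neg.2 (hB hmem hθ hgt))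
  rw [descentAmplitude_eq_mul_cos, mul_assoc]
  refine mul_pos (by positivity) (pos_of_mul_pos_left ?_ (sq_nonneg
    (∏ j ∈ Finset.range k, (π / 2 + j * π - descentPhase a c θ))))
  linarith [mul_pos hcos hagree]

end SignPattern

section Integrability

variable {a c Y : ℝ}

theorem image_exp_univ : exp '' univ = Ioi 0 := by rw [image_univ, range_exp]

theorem exp_smul_rpow_mul_exp (c Y s : ℝ) :
    exp s • (exp s ^ (c - 1) * exp (-(Y * exp s))) = exp (c * s - Y * exp s) := by
  rw [smul_eq_mul, ← exp_mul, ← exp_add, ← exp_add]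
  ring_nf

theorem integrable_exp_mul_sub_mul_exp (hc : 0 < c) (hY : 0 < Y) :
    Integrable fun s ↦ exp (c * s - Y * exp s) := by
  rw [← integrableOn_univ]
  have h := (integrableOn_image_iff_integrableOn_deriv_smul_of_monotoneOn MeasurableSet.univ
    (fun s _ ↦ (hasDerivAt_exp s).hasDerivWithinAt) (exp_monotone.monotoneOn _)
    (fun r ↦ r ^ (c - 1) * exp (-(Y * r)))).1
  simp only [exp_smul_rpow_mul_exp] at h
  refine h (image_exp_univ ▸ ?_)
  simpa using integrableOn_rpow_mul_exp_neg_mul_rpow (p := 1) (s := c - 1) (by linarith) one_pos hY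

theorem integral_exp_mul_sub_mul_exp (hc : 0 < c) (hY : 0 < Y) :
    ∫ s, exp (c * s - Y * exp s) = Gamma c / Y ^ c := by
  have h := integral_image_eq_integral_deriv_smul_of_monotoneOn MeasurableSet.univ
    (fun s _ ↦ (hasDerivAt_exp s).hasDerivWithinAt) (exp_monotone.monotoneOn _)
    (fun r ↦ r ^ (c - 1) * exp (-(Y * r)))
  simp only [exp_smul_rpow_mul_exp, Measure.restrict_univ] at h
  rw [← h, image_exp_univ, integral_rpow_mul_exp_neg_mul_Ioi hc hY, one_div, inv_rpow hY.le,
    inv_mul_eq_div]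

theorem mul_sub_mul_exp_le (hc : 0 < c) (hY : 0 < Y) (s : ℝ) :
    c * s - Y * exp s ≤ c * (log (c / Y) - 1) := by
  have h := add_one_le_exp (s - log (c / Y))
  rw [exp_sub, exp_log (div_pos hc hY), div_div_eq_mul_div, le_div_iff₀ hc] at h
  linarith

theorem abs_descentAmplitude_le {θ : ℝ} (ha : a ∈ Ioo 0 1) (hθ : θ ∈ Ioo 0 π) :
    |descentAmplitude a c θ| ≤ exp (c * descentRe a θ) * (descentSlope a θ + 1) := by
  rw [descentAmplitude, abs_mul, abs_exp]
  refine mul_le_mul_of_nonneg_left ((abs_add_le _ _).trans ?_) (exp_pos _).le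
  rw [abs_mul, abs_of_pos (descentSlope_pos ha hθ)]
  exact add_le_add (mul_le_of_le_one_right (descentSlope_pos ha hθ).le (abs_sin_le_one _))
    (abs_cos_le_one _)

theorem continuousOn_descentRe (ha : a ∈ Ioo 0 1) : ContinuousOn (descentRe a) (Ioo 0 π) :=
  fun _ hθ ↦ (hasDerivAt_descentRe ha hθ).continuousAt.continuousWithinAt

theorem continuousOn_descentDepth (ha : a ∈ Ioo 0 1) : ContinuousOn (descentDepth a) (Ioo 0 π) :=
  ((continuousOn_descentRe ha).rexp.mul (by fun_prop)).div (by fun_prop)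
    fun _ hθ ↦ (sin_mul_pos ha hθ).ne'

theorem continuousOn_descentAmplitude (ha : a ∈ Ioo 0 1) :
    ContinuousOn (descentAmplitude a c) (Ioo 0 π) := by
  have hslope : ContinuousOn (descentSlope a) (Ioo 0 π) := fun _ hθ ↦
    (hasDerivAt_descentSlope ha hθ).continuousAt.continuousWithinAt
  have hRe := continuousOn_descentRe ha
  unfold descentAmplitude
  fun_prop

theorem integrableOn_descentSlope_mul_exp (ha : a ∈ Ioo 0 1) (hc : 0 < c) (hY : 0 < Y) :
    IntegrableOn (fun θ ↦ descentSlope a θ *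
      exp (c * descentRe a θ - Y * exp (descentRe a θ))) (Ioo 0 π) :=
  (integrableOn_image_iff_integrableOn_deriv_smul_of_monotoneOn measurableSet_Ioo
    (fun _ hθ ↦ (hasDerivAt_descentRe ha hθ).hasDerivWithinAt)
    (strictMonoOn_descentRe ha).monotoneOn _).1
    (integrable_exp_mul_sub_mul_exp hc hY).integrableOn

theorem laplaceIntegrable_descentAmplitude (ha : a ∈ Ioo 0 1) (hc : 0 < c) :
    LaplaceIntegrable (volume.restrict (Ioo 0 π)) (descentDepth a) (descentAmplitude a c) := by
  intro X hX
  set Y := X * depthRatio a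
  have hY : 0 < Y := mul_pos hX (depthRatio_pos ha)
  refine Integrable.mono' ((integrableOn_descentSlope_mul_exp ha hc hY).add
    (integrable_const (exp (c * (log (c / Y) - 1))))) ?_ ?_
  · have hB := continuousOn_descentDepth ha
    have hm := continuousOn_descentAmplitude (c := c) ha
    exact ContinuousOn.aestronglyMeasurable (by fun_prop) measurableSet_Ioo
  · filter_upwards [ae_restrict_mem measurableSet_Ioo] with θ hθ
    have hdepth : Y * exp (descentRe a θ) ≤ X * descentDepth a θ := by
      rw [mul_assoc]
      exact mul_le_mul_of_nonneg_left (depthRatio_mul_exp_le_descentDepth ha hθ) hX.le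
    rw [norm_mul, norm_eq_abs, norm_eq_abs, abs_exp, Pi.add_apply]
    calc exp (-(X * descentDepth a θ)) * |descentAmplitude a c θ|
        ≤ exp (-(Y * exp (descentRe a θ))) *
          (exp (c * descentRe a θ) * (descentSlope a θ + 1)) :=
        mul_le_mul (exp_le_exp.2 (neg_le_neg hdepth)) (abs_descentAmplitude_le ha hθ)
          (abs_nonneg _) (exp_pos _).le
      _ = descentSlope a θ * exp (c * descentRe a θ - Y * exp (descentRe a θ)) +
          exp (c * descentRe a θ - Y * exp (descentRe a θ)) := by
        rw [sub_eq_neg_add, exp_add]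
        ring
      _ ≤ _ := add_le_add_right (exp_le_exp.2 (mul_sub_mul_exp_le hc hY _)) _

end Integrability

section Contour

variable {a c X θ s : ℝ}

/-- The integrand `exp (X (exp z - exp (a z)) + c z)` whose imaginary part is integrated along
the curve with real part `descentRe a` and along the line `Im z = π`. -/
noncomputable def contourIntegrand (a c X : ℝ) (z : ℂ) : ℂ :=
  Complex.exp (X * (Complex.exp z - Complex.exp (a * z)) + c * z)

/-- The curve in the strip `0 < Im z < π` on which `exp z - exp (a z)` is real, parametrized by
the imaginary part. -/
noncomputable def descentCurve (a θ : ℝ) : ℂ := descentRe a θ + θ * Complex.I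

theorem descentCurve_re : (descentCurve a θ).re = descentRe a θ := by simp [descentCurve]

theorem descentCurve_im : (descentCurve a θ).im = θ := by simp [descentCurve]

theorem hasDerivAt_descentCurve (ha : a ∈ Ioo 0 1) (hθ : θ ∈ Ioo 0 π) :
    HasDerivAt (descentCurve a) (descentSlope a θ + Complex.I) θ :=
  ((hasDerivAt_descentRe ha hθ).ofReal_comp.add
    ((hasDerivAt_id θ).ofReal_comp.mul_const Complex.I)).congr_deriv (by simp)

theorem exp_descentCurve_sub_exp (ha : a ∈ Ioo 0 1) (hθ : θ ∈ Ioo 0 π) :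
    Complex.exp (descentCurve a θ) - Complex.exp (a * descentCurve a θ) =
      ((-descentDepth a θ : ℝ) : ℂ) := by
  have hsin := sin_mul_pos ha hθ
  have hcurve := exp_mul_descentRe_mul_sin ha hθ
  apply Complex.ext
  · have hsub : sin ((1 - a) * θ) = sin θ * cos (a * θ) - cos θ * sin (a * θ) := by
      rw [one_sub_mul, sin_sub]
    rw [Complex.sub_re, Complex.exp_re, Complex.exp_re, Complex.re_ofReal_mul,
      Complex.im_ofReal_mul, descentCurve_re, descentCurve_im, Complex.ofReal_re, descentDepth,
      hsub]
    field_simp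
    linear_combination -cos (a * θ) * hcurve
  · rw [Complex.sub_im, Complex.exp_im, Complex.exp_im, Complex.re_ofReal_mul,
      Complex.im_ofReal_mul, descentCurve_re, descentCurve_im, Complex.ofReal_im, hcurve, sub_self]

theorem contourIntegrand_descentCurve (ha : a ∈ Ioo 0 1) (hθ : θ ∈ Ioo 0 π) :
    contourIntegrand a c X (descentCurve a θ) =
      (exp (-(X * descentDepth a θ)) : ℝ) * Complex.exp (c * descentCurve a θ) := by
  rw [contourIntegrand, exp_descentCurve_sub_exp ha hθ, Complex.exp_add]
  push_cast
  rw [mul_neg]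

theorem im_exp_mul_descentCurve_mul_deriv :
    (Complex.exp (c * descentCurve a θ) * (descentSlope a θ + Complex.I)).im =
      descentAmplitude a c θ := by
  rw [Complex.mul_im, Complex.exp_re, Complex.exp_im, Complex.re_ofReal_mul, Complex.im_ofReal_mul,
    descentCurve_re, descentCurve_im, Complex.add_re, Complex.add_im, Complex.ofReal_re,
    Complex.ofReal_im, Complex.I_re, Complex.I_im, descentAmplitude]
  ring

theorem im_contourIntegrand_mul_deriv (ha : a ∈ Ioo 0 1) (hθ : θ ∈ Ioo 0 π) :
    (contourIntegrand a c X (descentCurve a θ) * (descentSlope a θ + Complex.I)).im =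
      exp (-(X * descentDepth a θ)) * descentAmplitude a c θ := by
  rw [contourIntegrand_descentCurve ha hθ, mul_assoc, Complex.im_ofReal_mul,
    im_exp_mul_descentCurve_mul_deriv]

theorem im_contourIntegrand_ofReal : (contourIntegrand a c X s).im = 0 := by
  have hcast : (X : ℂ) * (Complex.exp s - Complex.exp (a * s)) + c * s =
      ((X * (exp s - exp (a * s)) + c * s : ℝ) : ℂ) := by push_cast; rfl
  rw [contourIntegrand, hcast, ← Complex.ofReal_exp, Complex.ofReal_im]

theorem differentiable_contourIntegrand : Differentiable ℂ (contourIntegrand a c X) := by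
  unfold contourIntegrand
  fun_prop

theorem norm_contourIntegrand_le {t κ : ℝ} (hX : 0 < X) (hκ : cos t ≤ κ) :
    ‖contourIntegrand a c X (s + t * Complex.I)‖ ≤
      exp (X * (κ * exp s + exp (a * s)) + c * s) := by
  have hre : (X * (Complex.exp (s + t * Complex.I) - Complex.exp (a * (s + t * Complex.I))) +
      c * (s + t * Complex.I)).re =
      X * (exp s * cos t - exp (a * s) * cos (a * t)) + c * s := by
    simp [Complex.exp_re, Complex.exp_im]
  rw [contourIntegrand, Complex.norm_exp, hre, exp_le_exp]
  have hcos : exp s * cos t ≤ κ * exp s := by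
    rw [mul_comm]
    exact mul_le_mul_of_nonneg_right hκ (exp_pos s).le
  have hcos' : -(exp (a * s) * cos (a * t)) ≤ exp (a * s) := by
    rw [← mul_neg]
    exact mul_le_of_le_one_right (exp_pos _).le (neg_le.2 (neg_one_le_cos _))
  gcongr
  linarith

theorem hasDerivAt_im_comp {P : ℂ → ℂ} {γ : ℝ → ℂ} {P' γ' : ℂ} {x : ℝ}
    (hP : HasDerivAt P P' (γ x)) (hγ : HasDerivAt γ γ' x) :
    HasDerivAt (fun x ↦ (P (γ x)).im) (P' * γ').im x :=
  HasFDerivAt.comp_hasDerivAt (f := P ∘ γ) x Complex.imCLM.hasFDerivAt (hP.comp x hγ)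

theorem exists_primitive_contourIntegrand (a c X : ℝ) :
    ∃ P : ℂ → ℂ, (∀ z, HasDerivAt P (contourIntegrand a c X z) z) ∧ ∀ s : ℝ, (P s).im = 0 := by
  obtain ⟨P, hP0, hP⟩ :=
    (differentiable_contourIntegrand (a := a) (c := c) (X := X)).isExactOn_univ.with_val_at 0 0
  have hderiv : ∀ s : ℝ, HasDerivAt (fun s : ℝ ↦ (P s).im) 0 s := fun s ↦
    (hasDerivAt_im_comp (hP s (mem_univ _)) (hasDerivAt_id s).ofReal_comp).congr_deriv
      (by simpa using im_contourIntegrand_ofReal)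
  refine ⟨P, fun z ↦ hP z (mem_univ z), fun s ↦ ?_⟩
  rw [is_const_of_deriv_eq_zero (fun s ↦ (hderiv s).differentiableAt)
    (fun s ↦ (hderiv s).deriv) s 0, Complex.ofReal_zero, hP0, Complex.zero_im]

theorem abs_im_sub_im_le_of_vertical {f P : ℂ → ℂ} {t t' C : ℝ} (hP : ∀ z, HasDerivAt P (f z) z)
    (ht : t ≤ t') (hC : ∀ η ∈ Icc t t', ‖f (s + η * Complex.I)‖ ≤ C) :
    |(P (s + t' * Complex.I)).im - (P (s + t * Complex.I)).im| ≤ C * (t' - t) := by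
  have hderiv : ∀ η : ℝ, HasDerivAt (fun η : ℝ ↦ P (s + η * Complex.I))
      (f (s + η * Complex.I) * Complex.I) η := fun η ↦
    (hP _).comp η ((((hasDerivAt_id η).ofReal_comp.mul_const Complex.I).const_add
      (s : ℂ)).congr_deriv (by simp))
  rw [← Complex.sub_im]
  refine (Complex.abs_im_le_norm _).trans
    (norm_image_sub_le_of_norm_deriv_le_segment' (f := fun η : ℝ ↦ P (s + η * Complex.I))
      (fun η _ ↦ (hderiv η).hasDerivWithinAt) (fun η hη ↦ ?_) t' (right_mem_Icc.2 ht))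
  rw [norm_mul, Complex.norm_I, mul_one]
  exact hC η (Ico_subset_Icc_self hη)

theorem exp_mul_le (ha : a ∈ Ioo 0 1) : exp (a * s) ≤ 1 - a + a * exp s := by
  simpa using convexOn_exp.2 (mem_univ 0) (mem_univ s) (sub_pos.2 ha.2).le ha.1.le
    (sub_add_cancel 1 a)

theorem tendsto_exp_contour_bound_atTop {κ : ℝ} (ha : a ∈ Ioo 0 1) (hX : 0 < X) (hκ : κ < -a) :
    Tendsto (fun s ↦ exp (X * (κ * exp s + exp (a * s)) + c * s)) atTop (𝓝 0) := by
  have hrate : 0 < X * (-a - κ) := mul_pos hX (sub_pos.2 hκ)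
  have hlim := ((tendsto_rpow_mul_exp_neg_mul_atTop_nhds_zero c _ hrate).comp
    tendsto_exp_atTop).const_mul (exp (X * (1 - a)))
  rw [mul_zero] at hlim
  refine squeeze_zero (fun s ↦ (exp_pos _).le) (fun s ↦ ?_) hlim
  rw [Function.comp_apply, ← exp_mul, ← exp_add, ← exp_add, exp_le_exp]
  nlinarith [exp_mul_le (s := s) ha]

theorem tendsto_exp_contour_bound_descentRe (ha : a ∈ Ioo 0 1) (hX : 0 < X) :
    Tendsto (fun θ ↦ exp (X * (-((1 + a) / 2) * exp (descentRe a θ) + exp (a * descentRe a θ)) +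
      c * descentRe a θ)) (𝓝[<] π) (𝓝 0) :=
  (tendsto_exp_contour_bound_atTop ha hX (by linarith [ha.2])).comp (tendsto_descentRe_atTop ha)

theorem eventually_cos_lt (ha : a < 1) : ∀ᶠ θ in 𝓝[<] π, cos θ < -((1 + a) / 2) :=
  (continuous_cos.continuousAt.mono_left nhdsWithin_le_nhds).eventually_lt_const
    (by rw [cos_pi]; linarith)

theorem tendsto_exp_contour_bound_atBot (ha : 0 < a) (hc : 0 < c) :
    Tendsto (fun s ↦ exp (X * (exp s + exp (a * s)) + c * s)) atBot (𝓝 0) := by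
  have hexp : ∀ {b : ℝ}, 0 < b → Tendsto (fun s ↦ exp (b * s)) atBot (𝓝 0) := fun hb ↦
    tendsto_exp_atBot.comp (tendsto_id.const_mul_atBot hb)
  have hlim := (((tendsto_exp_atBot.add (hexp ha)).const_mul X).rexp).mul (hexp hc)
  simp only [← exp_add, mul_zero] at hlim
  exact hlim

theorem integrable_exp_neg_one_contour_bound (ha : a ∈ Ioo 0 1) (hc : 0 < c) (hX : 0 < X) :
    Integrable fun s ↦ exp (X * (-1 * exp s + exp (a * s)) + c * s) := by
  refine ((integrable_exp_mul_sub_mul_exp hc (mul_pos hX (sub_pos.2 ha.2))).const_mul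
    (exp (X * (1 - a)))).mono' (by fun_prop) (.of_forall fun s ↦ ?_)
  rw [norm_of_nonneg (exp_pos _).le, ← exp_add, exp_le_exp]
  nlinarith [exp_mul_le (s := s) ha]

theorem abs_im_contourIntegrand_line_le (hX : 0 < X) :
    |(contourIntegrand a c X (s + π * Complex.I)).im| ≤
      exp (X * (-1 * exp s + exp (a * s)) + c * s) :=
  (Complex.abs_im_le_norm _).trans (norm_contourIntegrand_le hX cos_pi.le)

theorem integrable_im_contourIntegrand_line (ha : a ∈ Ioo 0 1) (hc : 0 < c) (hX : 0 < X) :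
    Integrable fun s : ℝ ↦ (contourIntegrand a c X (s + π * Complex.I)).im := by
  refine (integrable_exp_neg_one_contour_bound ha hc hX).mono' ?_
    (.of_forall fun s ↦ abs_im_contourIntegrand_line_le hX)
  have := (differentiable_contourIntegrand (a := a) (c := c) (X := X)).continuous
  exact Continuous.aestronglyMeasurable (by fun_prop)

section Primitive

variable {P : ℂ → ℂ}

theorem abs_im_primitive_le {t : ℝ} (hX : 0 < X)
    (hP : ∀ z, HasDerivAt P (contourIntegrand a c X z) z) (hreal : ∀ s : ℝ, (P s).im = 0)
    (ht : 0 ≤ t) :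
    |(P (s + t * Complex.I)).im| ≤ exp (X * (exp s + exp (a * s)) + c * s) * t := by
  have hdiff := abs_im_sub_im_le_of_vertical (s := s) hP ht fun η _ ↦
    norm_contourIntegrand_le hX (cos_le_one η)
  simpa only [Complex.ofReal_zero, zero_mul, add_zero, hreal, sub_zero, one_mul] using hdiff

theorem tendsto_im_primitive_descentCurve_zero (ha : a ∈ Ioo 0 1) (hc : 0 < c) (hX : 0 < X)
    (hP : ∀ z, HasDerivAt P (contourIntegrand a c X z) z) (hreal : ∀ s : ℝ, (P s).im = 0) :
    Tendsto (fun θ ↦ (P (descentCurve a θ)).im) (𝓝[>] 0) (𝓝 0) := by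
  have hmid : π / 2 ∈ Ioo 0 π := ⟨pi_div_two_pos, half_lt_self pi_pos⟩
  set S := descentRe a (π / 2)
  have hlim : Tendsto (fun θ ↦ exp (X * (exp S + exp (a * S)) + c * S) * θ) (𝓝[>] 0) (𝓝 0) :=
    ((continuous_const_mul _).tendsto' 0 0 (mul_zero _)).mono_left nhdsWithin_le_nhds
  refine squeeze_zero_norm' ?_ hlim
  filter_upwards [Ioo_mem_nhdsGT pi_div_two_pos] with θ hθ
  have hle : descentRe a θ ≤ S :=
    (strictMonoOn_descentRe ha).monotoneOn ⟨hθ.1, hθ.2.trans hmid.2⟩ hmid hθ.2.le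
  refine (abs_im_primitive_le hX hP hreal hθ.1.le).trans
    (mul_le_mul_of_nonneg_right (exp_le_exp.2 ?_) hθ.1.le)
  have := ha.1
  gcongr

theorem tendsto_im_primitive_descentCurve_sub_line (ha : a ∈ Ioo 0 1) (hX : 0 < X)
    (hP : ∀ z, HasDerivAt P (contourIntegrand a c X z) z) :
    Tendsto (fun θ ↦ (P (descentRe a θ + π * Complex.I)).im - (P (descentCurve a θ)).im)
      (𝓝[<] π) (𝓝 0) := by
  have hlim := (tendsto_exp_contour_bound_descentRe (c := c) ha hX).mul_const π
  rw [zero_mul] at hlim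
  refine squeeze_zero_norm' ?_ hlim
  filter_upwards [eventually_cos_lt ha.2, Ioo_mem_nhdsLT pi_pos] with θ hcosθ hθ
  refine (abs_im_sub_im_le_of_vertical hP hθ.2.le fun η hη ↦ norm_contourIntegrand_le hX
    ((cos_le_cos_of_nonneg_of_le_pi hθ.1.le hη.2 hη.1).trans hcosθ.le)).trans ?_
  exact mul_le_mul_of_nonneg_left (by linarith [hθ.1]) (exp_pos _).le

theorem tendsto_im_primitive_line_atTop (ha : a ∈ Ioo 0 1) (hc : 0 < c) (hX : 0 < X)
    (hP : ∀ z, HasDerivAt P (contourIntegrand a c X z) z) (hreal : ∀ s : ℝ, (P s).im = 0) :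
    Tendsto (fun s : ℝ ↦ (P (s + π * Complex.I)).im) atTop
      (𝓝 (∫ s : ℝ, (contourIntegrand a c X (s + π * Complex.I)).im)) := by
  have hint := integrable_im_contourIntegrand_line ha hc hX
  have hderiv : ∀ s : ℝ, HasDerivAt (fun s : ℝ ↦ (P (s + π * Complex.I)).im)
      (contourIntegrand a c X (s + π * Complex.I)).im s := fun s ↦
    (hasDerivAt_im_comp (hP _)
      ((hasDerivAt_id s).ofReal_comp.add_const (π * Complex.I))).congr_deriv (by simp)
  have hbot : Tendsto (fun s : ℝ ↦ (P (s + π * Complex.I)).im) atBot (𝓝 0) := by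
    have hlim := (tendsto_exp_contour_bound_atBot (X := X) ha.1 hc).mul_const π
    rw [zero_mul] at hlim
    exact squeeze_zero_norm (fun s ↦ abs_im_primitive_le hX hP hreal pi_pos.le) hlim
  refine ((aecover_Iic tendsto_id).integral_tendsto_of_countably_generated hint).congr fun s ↦ ?_
  rw [integral_Iic_of_hasDerivAt_of_tendsto' (fun s _ ↦ hderiv s) hint.integrableOn hbot, sub_zero,
    id_eq]

end Primitive

/-- The Laplace transform of the amplitude against the depth along the curve of descent. -/
noncomputable def descentIntegral (a c : ℝ) : ℝ → ℝ :=
  laplaceIntegral (volume.restrict (Ioo 0 π)) (descentDepth a) (descentAmplitude a c)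

theorem intervalIntegrable_exp_mul_descentAmplitude (ha : a ∈ Ioo 0 1) (hc : 0 < c)
    (hX : 0 < X) : IntervalIntegrable
      (fun θ ↦ exp (-(X * descentDepth a θ)) * descentAmplitude a c θ) volume 0 π :=
  (intervalIntegrable_iff_integrableOn_Ioo_of_le pi_pos.le).2
    (laplaceIntegrable_descentAmplitude ha hc X hX)

theorem descentIntegral_eq_intervalIntegral : descentIntegral a c X =
    ∫ θ in (0)..π, exp (-(X * descentDepth a θ)) * descentAmplitude a c θ := by
  rw [intervalIntegral.integral_of_le pi_pos.le, integral_Ioc_eq_integral_Ioo]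
  rfl

theorem descentIntegral_eq_integral_line (ha : a ∈ Ioo 0 1) (hc : 0 < c) (hX : 0 < X) :
    descentIntegral a c X = ∫ s : ℝ, (contourIntegrand a c X (s + π * Complex.I)).im := by
  obtain ⟨P, hP, hreal⟩ := exists_primitive_contourIntegrand a c X
  have hderiv : ∀ θ ∈ Ioo 0 π, HasDerivAt (fun θ ↦ (P (descentCurve a θ)).im)
      (exp (-(X * descentDepth a θ)) * descentAmplitude a c θ) θ := fun θ hθ ↦
    (hasDerivAt_im_comp (hP _) (hasDerivAt_descentCurve ha hθ)).congr_deriv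
      (im_contourIntegrand_mul_deriv ha hθ)
  have hright : Tendsto (fun θ ↦ (P (descentCurve a θ)).im) (𝓝[<] π)
      (𝓝 (∫ s : ℝ, (contourIntegrand a c X (s + π * Complex.I)).im)) := by
    simpa only [Function.comp_def, sub_sub_cancel, sub_zero] using
      ((tendsto_im_primitive_line_atTop ha hc hX hP hreal).comp
        (tendsto_descentRe_atTop ha)).sub (tendsto_im_primitive_descentCurve_sub_line ha hX hP)
  rw [descentIntegral_eq_intervalIntegral,
    intervalIntegral.integral_eq_sub_of_hasDerivAt_of_tendsto pi_pos hderiv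
      (intervalIntegrable_exp_mul_descentAmplitude ha hc hX)
      (tendsto_im_primitive_descentCurve_zero ha hc hX hP hreal) hright, sub_zero]

end Contour

section Series

variable {a c X s : ℝ}

theorem Gamma_mul_sin_pi_mul (hs : 0 < s) : Gamma s * sin (π * s) = π / Gamma (1 - s) := by
  have hreflect := Gamma_mul_Gamma_one_sub s
  by_cases hsin : sin (π * s) = 0
  · rw [hsin, div_zero, mul_eq_zero_iff_left (Gamma_pos_of_pos hs).ne'] at hreflect
    rw [hsin, hreflect, mul_zero, div_zero]
  · have hne : Gamma (1 - s) ≠ 0 := fun h ↦ by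
      rw [h, mul_zero] at hreflect
      exact div_ne_zero pi_ne_zero hsin hreflect.symm
    rw [eq_div_iff hne, mul_right_comm, hreflect, div_mul_cancel₀ _ hsin]

theorem contourIntegrand_line : contourIntegrand a c X (s + π * Complex.I) =
    Complex.exp (c * (s + π * Complex.I)) * (exp (-(X * exp s)) : ℝ) *
      Complex.exp (-X * Complex.exp (a * (s + π * Complex.I))) := by
  rw [contourIntegrand, Complex.ofReal_exp, ← Complex.exp_add, ← Complex.exp_add, Complex.exp_add s,
    Complex.exp_pi_mul_I]
  congr 1
  push_cast
  ring

theorem hasSum_im_contourIntegrand_line : HasSum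
    (fun n : ℕ ↦ (-X) ^ n / n.factorial * sin (π * (c + a * n)) *
      exp ((c + a * n) * s - X * exp s))
    (contourIntegrand a c X (s + π * Complex.I)).im := by
  set z : ℂ := s + π * Complex.I with hz
  have hexp := NormedSpace.expSeries_div_hasSum_exp (-(X : ℂ) * Complex.exp (a * z))
  rw [← Complex.exp_eq_exp_ℂ] at hexp
  have him := Complex.imCLM.hasSum
    (hexp.mul_left (Complex.exp (c * z) * (exp (-(X * exp s)) : ℝ)))
  rw [← contourIntegrand_line] at him
  refine him.congr_fun fun n ↦ ?_
  have hterm : Complex.exp (c * z) * (exp (-(X * exp s)) : ℝ) *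
      ((-(X : ℂ) * Complex.exp (a * z)) ^ n / n.factorial) =
      ((-X) ^ n / n.factorial * exp (-(X * exp s)) : ℝ) *
        Complex.exp ((c + a * n : ℝ) * z) := by
    have hadd : ((c + a * n : ℝ) : ℂ) * z = c * z + n * (a * z) := by push_cast; ring
    rw [mul_pow, ← Complex.exp_nat_mul, hadd, Complex.exp_add]
    push_cast
    ring
  have himz : (Complex.exp ((c + a * n : ℝ) * z)).im =
      exp ((c + a * n) * s) * sin (π * (c + a * n)) := by
    rw [Complex.exp_im, Complex.re_ofReal_mul, Complex.im_ofReal_mul, hz]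
    simp [mul_comm π]
  rw [Complex.imCLM_apply, hterm, Complex.im_ofReal_mul, himz, sub_eq_add_neg, exp_add]
  ring

theorem integral_contour_term (ha : 0 < a) (hc : 0 < c) (hX : 0 < X) (n : ℕ) :
    ∫ s, (-X) ^ n / n.factorial * sin (π * (c + a * n)) * exp ((c + a * n) * s - X * exp s) =
      π / X ^ c * ((-X ^ (1 - a)) ^ n / (n.factorial * Gamma (1 - c + -a * n))) := by
  have hcn : 0 < c + a * n := by positivity
  have hpow : (-X) ^ n / X ^ (c + a * n) = (-X ^ (1 - a)) ^ n / X ^ c := by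
    rw [rpow_add hX, rpow_sub hX, rpow_one, rpow_mul hX.le, rpow_natCast, neg_pow X,
      neg_pow (X / X ^ a), div_pow]
    field_simp
  have hΓ := Gamma_mul_sin_pi_mul hcn
  rw [show 1 - (c + a * n) = 1 - c + -a * n by ring] at hΓ
  rw [integral_const_mul, integral_exp_mul_sub_mul_exp hcn hX]
  calc (-X) ^ n / n.factorial * sin (π * (c + a * n)) * (Gamma (c + a * n) / X ^ (c + a * n))
      = (-X) ^ n / X ^ (c + a * n) / n.factorial * (Gamma (c + a * n) * sin (π * (c + a * n))) := by
        ring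
    _ = _ := by
        rw [hpow, hΓ]
        ring

theorem hasSum_integral_line (ha : a ∈ Ioo 0 1) (hc : 0 < c) (hX : 0 < X) : HasSum
    (fun n : ℕ ↦ π / X ^ c * ((-X ^ (1 - a)) ^ n / (n.factorial * Gamma (1 - c + -a * n))))
    (∫ s : ℝ, (contourIntegrand a c X (s + π * Complex.I)).im) := by
  simp_rw [← integral_contour_term ha.1 hc hX]
  have hbound : ∀ s : ℝ, HasSum
      (fun n : ℕ ↦ (X * exp (a * s)) ^ n / n.factorial * exp (c * s - X * exp s))
      (exp (X * (-1 * exp s + exp (a * s)) + c * s)) := fun s ↦ by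
    have hsplit : X * (-1 * exp s + exp (a * s)) + c * s =
        X * exp (a * s) + (c * s - X * exp s) := by ring
    have hexp := (NormedSpace.expSeries_div_hasSum_exp (X * exp (a * s))).mul_right
      (exp (c * s - X * exp s))
    rw [← exp_eq_exp_ℝ, ← exp_add] at hexp
    rwa [hsplit]
  refine hasSum_integral_of_dominated_convergence
    (fun n s ↦ (X * exp (a * s)) ^ n / n.factorial * exp (c * s - X * exp s))
    (fun n ↦ by fun_prop) (fun n ↦ .of_forall fun s ↦ ?_)
    (.of_forall fun s ↦ (hbound s).summable) ?_
    (.of_forall fun s ↦ hasSum_im_contourIntegrand_line)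
  · have hsplit : exp ((c + a * n) * s - X * exp s) =
        exp (a * s) ^ n * exp (c * s - X * exp s) := by
      rw [← exp_nat_mul, ← exp_add]
      ring_nf
    rw [norm_mul, norm_mul, norm_div, norm_pow, norm_neg, norm_of_nonneg hX.le,
      norm_of_nonneg (Nat.cast_nonneg (α := ℝ) n.factorial), norm_of_nonneg (exp_pos _).le, hsplit,
      mul_pow]
    calc X ^ n / n.factorial * ‖sin (π * (c + a * n))‖ *
          (exp (a * s) ^ n * exp (c * s - X * exp s))
        ≤ X ^ n / n.factorial * 1 * (exp (a * s) ^ n * exp (c * s - X * exp s)) := by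
          gcongr
          exact abs_sin_le_one _
      _ = X ^ n * exp (a * s) ^ n / n.factorial * exp (c * s - X * exp s) := by ring
  · simpa only [fun s ↦ (hbound s).tsum_eq] using integrable_exp_neg_one_contour_bound ha hc hX

theorem descentIntegral_eq_wright (ha : a ∈ Ioo 0 1) (hc : 0 < c) (hX : 0 < X) :
    descentIntegral a c X = π / X ^ c * wright (-a) (1 - c) (-X ^ (1 - a)) := by
  rw [descentIntegral_eq_integral_line ha hc hX, ← (hasSum_integral_line ha hc hX).tsum_eq,
    tsum_mul_left, wright]

theorem abs_descentIntegral_le (ha : a ∈ Ioo 0 1) (hc : 0 < c) (hX : 0 < X) :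
    |descentIntegral a c X| ≤
      exp (X * (1 - a)) * (Gamma c / (X * (1 - a)) ^ c) := by
  have hrate := mul_pos hX (sub_pos.2 ha.2)
  rw [descentIntegral_eq_integral_line ha hc hX, ← integral_exp_mul_sub_mul_exp hc hrate,
    ← integral_const_mul, ← norm_eq_abs]
  refine norm_integral_le_of_norm_le ((integrable_exp_mul_sub_mul_exp hc hrate).const_mul _)
    (.of_forall fun s ↦ (abs_im_contourIntegrand_line_le hX).trans ?_)
  rw [← exp_add, exp_le_exp]
  nlinarith [exp_mul_le (s := s) ha]

end Series

section Recurrence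

variable {a c X θ : ℝ}

theorem hasDerivAt_contourIntegrand (z : ℂ) : HasDerivAt (contourIntegrand a c X)
    ((X * (Complex.exp z - a * Complex.exp (a * z)) + c) * contourIntegrand a c X z) z := by
  have hexponent : HasDerivAt
      (fun z : ℂ ↦ X * (Complex.exp z - Complex.exp (a * z)) + c * z)
      (X * (Complex.exp z - Complex.exp (a * z) * a) + c) z :=
    (((Complex.hasDerivAt_exp z).sub (hasDerivAt_const_mul (a : ℂ)).cexp).const_mul (X : ℂ)).add
      (hasDerivAt_const_mul (c : ℂ))
  refine hexponent.cexp.congr_deriv ?_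
  rw [contourIntegrand]
  ring

theorem exp_mul_contourIntegrand (z : ℂ) :
    Complex.exp z * contourIntegrand a c X z = contourIntegrand a (c + 1) X z := by
  rw [contourIntegrand, contourIntegrand, ← Complex.exp_add]
  push_cast
  ring_nf

theorem hasDerivAt_im_contourIntegrand_descentCurve (ha : a ∈ Ioo 0 1) (hθ : θ ∈ Ioo 0 π) :
    HasDerivAt (fun θ ↦ (contourIntegrand a c X (descentCurve a θ)).im)
      (X * (1 - a) * (exp (-(X * descentDepth a θ)) * descentAmplitude a (c + 1) θ) -
        a * X * (exp (-(X * descentDepth a θ)) * (descentDepth a θ * descentAmplitude a c θ)) +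
        c * (exp (-(X * descentDepth a θ)) * descentAmplitude a c θ)) θ := by
  refine (hasDerivAt_im_comp (hasDerivAt_contourIntegrand _)
    (hasDerivAt_descentCurve ha hθ)).congr_deriv ?_
  have hexp : Complex.exp (a * descentCurve a θ) =
      Complex.exp (descentCurve a θ) + (descentDepth a θ : ℝ) := by
    have hreal := exp_descentCurve_sub_exp ha hθ
    push_cast at hreal
    linear_combination -hreal
  have hsplit : (X * (Complex.exp (descentCurve a θ) - a * Complex.exp (a * descentCurve a θ)) +
      c) * contourIntegrand a c X (descentCurve a θ) * (descentSlope a θ + Complex.I) =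
      (X * (1 - a) : ℝ) *
          (contourIntegrand a (c + 1) X (descentCurve a θ) * (descentSlope a θ + Complex.I)) +
        (c - a * X * descentDepth a θ : ℝ) *
          (contourIntegrand a c X (descentCurve a θ) * (descentSlope a θ + Complex.I)) := by
    rw [hexp, ← exp_mul_contourIntegrand]
    push_cast
    ring
  rw [hsplit, Complex.add_im, Complex.im_ofReal_mul, Complex.im_ofReal_mul,
    im_contourIntegrand_mul_deriv ha hθ, im_contourIntegrand_mul_deriv ha hθ]
  ring

theorem tendsto_im_contourIntegrand_descentCurve_nhdsGT (ha : a ∈ Ioo 0 1) (hc : 0 < c)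
    (hX : 0 < X) :
    Tendsto (fun θ ↦ (contourIntegrand a c X (descentCurve a θ)).im) (𝓝[>] 0) (𝓝 0) := by
  have hmid : π / 2 ∈ Ioo 0 π := ⟨pi_div_two_pos, half_lt_self pi_pos⟩
  have hlim : Tendsto (fun θ ↦ exp (c * descentRe a (π / 2)) * |sin (c * θ)|) (𝓝[>] 0) (𝓝 0) :=
    (Continuous.tendsto' (by fun_prop) 0 0 (by simp)).mono_left nhdsWithin_le_nhds
  refine squeeze_zero_norm' ?_ hlim
  filter_upwards [Ioo_mem_nhdsGT pi_div_two_pos] with θ hθ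
  have hθπ : θ ∈ Ioo 0 π := ⟨hθ.1, hθ.2.trans hmid.2⟩
  have hle : descentRe a θ ≤ descentRe a (π / 2) :=
    (strictMonoOn_descentRe ha).monotoneOn hθπ hmid hθ.2.le
  have hdepth : 0 < descentDepth a θ := by
    rw [descentDepth_eq_exp ha hθπ]
    exact exp_pos _
  rw [contourIntegrand_descentCurve ha hθπ, Complex.im_ofReal_mul, Complex.exp_im,
    Complex.re_ofReal_mul, Complex.im_ofReal_mul, descentCurve_re, descentCurve_im, norm_mul,
    norm_mul, norm_eq_abs, norm_eq_abs, norm_eq_abs, abs_exp, abs_exp]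
  refine (mul_le_of_le_one_left (by positivity) (exp_le_one_iff.2 ?_)).trans ?_
  · exact neg_nonpos.2 (mul_pos hX hdepth).le
  · gcongr

theorem tendsto_im_contourIntegrand_descentCurve_nhdsLT (ha : a ∈ Ioo 0 1) (hX : 0 < X) :
    Tendsto (fun θ ↦ (contourIntegrand a c X (descentCurve a θ)).im) (𝓝[<] π) (𝓝 0) := by
  refine squeeze_zero_norm' ?_ (tendsto_exp_contour_bound_descentRe (c := c) ha hX)
  filter_upwards [eventually_cos_lt ha.2] with θ hθ
  exact (Complex.abs_im_le_norm _).trans (norm_contourIntegrand_le hX hθ.le)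

theorem aestronglyMeasurable_descentDepth (ha : a ∈ Ioo 0 1) :
    AEStronglyMeasurable (descentDepth a) (volume.restrict (Ioo 0 π)) :=
  (continuousOn_descentDepth ha).aestronglyMeasurable measurableSet_Ioo

/-- Integrating the derivative of `Im (contourIntegrand a c X)` along the curve gives zero. -/
theorem descentIntegral_recurrence (ha : a ∈ Ioo 0 1) (hc : 0 < c) (hX : 0 < X) :
    X * (1 - a) * descentIntegral a (c + 1) X -
      a * X * laplaceIntegral (volume.restrict (Ioo 0 π)) (descentDepth a)
        (fun θ ↦ descentDepth a θ * descentAmplitude a c θ) X +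
      c * descentIntegral a c X = 0 := by
  have hint := laplaceIntegrable_descentAmplitude ha hc
  have hint' := hint.mul_phase (aestronglyMeasurable_descentDepth ha) X hX
  have hint₁ := laplaceIntegrable_descentAmplitude ha (add_pos hc one_pos) X hX
  have hsum := ((hint₁.const_mul (X * (1 - a))).sub (hint'.const_mul (a * X))).add
    ((hint X hX).const_mul c)
  have hftc := intervalIntegral.integral_eq_sub_of_hasDerivAt_of_tendsto pi_pos
    (fun θ hθ ↦ hasDerivAt_im_contourIntegrand_descentCurve ha hθ)
    ((intervalIntegrable_iff_integrableOn_Ioo_of_le pi_pos.le).2 hsum)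
    (tendsto_im_contourIntegrand_descentCurve_nhdsGT ha hc hX)
    (tendsto_im_contourIntegrand_descentCurve_nhdsLT ha hX)
  rw [sub_zero, intervalIntegral.integral_of_le pi_pos.le, integral_Ioc_eq_integral_Ioo,
    integral_add, integral_sub, integral_const_mul, integral_const_mul, integral_const_mul] at hftc
  · exact hftc
  · exact hint₁.const_mul _
  · exact hint'.const_mul _
  · exact (hint₁.const_mul _).sub (hint'.const_mul _)
  · exact (hint X hX).const_mul c

theorem hasDerivAt_descentIntegral (ha : a ∈ Ioo 0 1) (hc : 0 < c) (hX : 0 < X) :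
    HasDerivAt (descentIntegral a c)
      (-((1 - a) / a * descentIntegral a (c + 1) X + c / (a * X) * descentIntegral a c X)) X := by
  refine ((laplaceIntegrable_descentAmplitude ha hc).hasDerivAt_laplaceIntegral
    (aestronglyMeasurable_descentDepth ha) hX).congr_deriv ?_
  have := ha.1.ne'
  field_simp
  linear_combination descentIntegral_recurrence ha hc hX

theorem hasDerivAt_rpow_mul_descentIntegral (ha : a ∈ Ioo 0 1) (hc : 0 < c) (hX : 0 < X) :
    HasDerivAt (fun X ↦ X ^ (c / a) * descentIntegral a c X)
      (-((1 - a) / a * (X ^ (c / a) * descentIntegral a (c + 1) X))) X := by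
  refine ((hasDerivAt_rpow_const (.inl hX.ne')).mul
    (hasDerivAt_descentIntegral ha hc hX)).congr_deriv ?_
  rw [rpow_sub_one hX.ne']
  have := ha.1.ne'
  field_simp
  ring

theorem tendsto_rpow_mul_descentIntegral (ha : a ∈ Ioo 0 1) (hc : 0 < c) :
    Tendsto (fun X ↦ X ^ (c / a) * descentIntegral a c X) (𝓝[>] 0) (𝓝 0) := by
  have hexponent : 0 < c / a - c :=
    sub_pos.2 ((lt_div_iff₀ ha.1).2 (mul_lt_of_lt_one_right hc ha.2))
  have hlim : Tendsto (fun X ↦ X ^ (c / a - c) * exp (X * (1 - a)) * (Gamma c / (1 - a) ^ c))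
      (𝓝[>] 0) (𝓝 0) := by
    have hcont : ContinuousAt
        (fun X ↦ X ^ (c / a - c) * exp (X * (1 - a)) * (Gamma c / (1 - a) ^ c)) 0 :=
      ((continuousAt_rpow_const _ _ (.inr hexponent.le)).mul (by fun_prop)).mul (by fun_prop)
    simpa only [zero_rpow hexponent.ne', zero_mul] using hcont.tendsto.mono_left nhdsWithin_le_nhds
  refine squeeze_zero_norm' ?_ hlim
  filter_upwards [self_mem_nhdsWithin] with X hX
  have hX : 0 < X := hX
  have h1a : 0 ≤ 1 - a := (sub_pos.2 ha.2).le
  rw [norm_mul, norm_of_nonneg (rpow_nonneg hX.le _), norm_eq_abs]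
  calc X ^ (c / a) * |descentIntegral a c X|
      ≤ X ^ (c / a) * (exp (X * (1 - a)) * (Gamma c / (X * (1 - a)) ^ c)) := by
        gcongr
        exact abs_descentIntegral_le ha hc hX
    _ = X ^ (c / a - c) * exp (X * (1 - a)) * (Gamma c / (1 - a) ^ c) := by
        rw [rpow_sub hX, mul_rpow hX.le h1a]
        ring

end Recurrence

section Count

variable {a c : ℝ}

theorem eventually_descentIntegral_pos (ha : a ∈ Ioo 0 1) (hc : 0 < c) :
    ∀ᶠ X in atTop, 0 < descentIntegral a c X := by
  set φ := min (π / 2) (π / (2 * c))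
  have hφ : φ ∈ Ioo 0 π := ⟨by positivity, (min_le_left _ _).trans_lt (half_lt_self pi_pos)⟩
  have hpos : ∀ θ ∈ Ioo 0 π, θ < φ → 0 < descentAmplitude a c θ := fun θ hθ hlt ↦ by
    refine descentAmplitude_pos ha hc hθ ?_
    have := (lt_div_iff₀ (by positivity)).1 (hlt.trans_le (min_le_right _ _))
    linarith
  have hmono := strictMonoOn_descentDepth ha
  refine (laplaceIntegrable_descentAmplitude ha hc).eventually_laplaceIntegral_pos
    (aestronglyMeasurable_descentDepth ha) (b := descentDepth a φ) ?_ ?_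
  · filter_upwards [ae_restrict_mem measurableSet_Ioo] with θ hθ hlt
    exact (hpos θ hθ ((hmono.lt_iff_lt hθ hφ).1 hlt)).le
  · have hsub : Ioo 0 φ ⊆ {θ | descentDepth a θ < descentDepth a φ ∧ 0 < descentAmplitude a c θ} :=
      fun θ hθ ↦ have hθπ : θ ∈ Ioo 0 π := ⟨hθ.1, hθ.2.trans hφ.2⟩
        ⟨hmono hθπ hφ hθ.2, hpos θ hθπ hθ.2⟩
    refine lt_of_lt_of_le ?_ (measure_mono hsub)
    rw [Measure.restrict_apply measurableSet_Ioo,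
      inter_eq_left.2 (Ioo_subset_Ioo_right hφ.2.le), volume_Ioo, ENNReal.ofReal_pos, sub_zero]
    exact hφ.1

theorem encard_zeros_descentIntegral_le {k : ℕ} (ha : a ∈ Ioo 0 1) (hkc : k < c)
    (hck : c ≤ k + 1) : {X | 0 < X ∧ descentIntegral a c X = 0}.encard ≤ k := by
  obtain ⟨b, hsign⟩ := exists_descentAmplitude_mul_prod_pos ha hkc hck
  have : NeZero (volume.restrict (Ioo 0 π)) := ⟨by simp [Measure.restrict_eq_zero, pi_pos]⟩
  have hle := (laplaceIntegrable_descentAmplitude ha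
    (k.cast_nonneg.trans_lt hkc)).encard_zeros_le (aestronglyMeasurable_descentDepth ha) hsign
  rwa [Finset.card_range] at hle

theorem encard_zeros_descentIntegral_add_one_le (ha : a ∈ Ioo 0 1) (hc : 0 < c) :
    {X | 0 < X ∧ descentIntegral a c X = 0}.encard + 1 ≤
      {X | 0 < X ∧ descentIntegral a (c + 1) X = 0}.encard := by
  have hratio : 0 < (1 - a) / a := div_pos (sub_pos.2 ha.2) ha.1
  have hzeros : {X | 0 < X ∧ descentIntegral a c X = 0} =
      {X | 0 < X ∧ X ^ (c / a) * descentIntegral a c X = 0} := by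
    ext X
    exact and_congr_right fun hX ↦ (mul_eq_zero_iff_left (rpow_pos_of_pos hX _).ne').symm
  have hzeros' : {X | 0 < X ∧ descentIntegral a (c + 1) X = 0} =
      {X | 0 < X ∧ -((1 - a) / a * (X ^ (c / a) * descentIntegral a (c + 1) X)) = 0} := by
    ext X
    refine and_congr_right fun hX ↦ ?_
    rw [neg_eq_zero, mul_eq_zero_iff_left hratio.ne',
      mul_eq_zero_iff_left (rpow_pos_of_pos hX _).ne']
  rw [hzeros, hzeros']
  refine encard_zeros_add_one_le_encard_deriv_zeros
    (fun X hX ↦ hasDerivAt_rpow_mul_descentIntegral ha hc hX)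
    (tendsto_rpow_mul_descentIntegral ha hc) ?_ ?_
  · filter_upwards [eventually_gt_atTop 0, eventually_descentIntegral_pos ha hc] with X hX hpos
    exact mul_pos (rpow_pos_of_pos hX _) hpos
  · filter_upwards [eventually_gt_atTop 0,
      eventually_descentIntegral_pos ha (add_pos hc one_pos)] with X hX hpos
    exact neg_neg_of_pos (mul_pos hratio (mul_pos (rpow_pos_of_pos hX _) hpos))

theorem encard_zeros_descentIntegral {k : ℕ} (ha : a ∈ Ioo 0 1) (hkc : k < c)
    (hck : c ≤ k + 1) : {X | 0 < X ∧ descentIntegral a c X = 0}.encard = k := by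
  refine (encard_zeros_descentIntegral_le ha hkc hck).antisymm ?_
  induction k generalizing c with
  | zero => exact zero_le
  | succ k ih =>
    push_cast at hkc hck ⊢
    have hstep := encard_zeros_descentIntegral_add_one_le ha (c := c - 1)
      (by linarith [k.cast_nonneg (α := ℝ)])
    rw [sub_add_cancel] at hstep
    exact (add_le_add_left (ih (c := c - 1) (by linarith) (by linarith)) 1).trans hstep

theorem encard_zeros_wright (ha : a ∈ Ioo 0 1) (hc : 0 < c) :
    {x | 0 < x ∧ wright (-a) (1 - c) (-x) = 0}.encard =
      {X | 0 < X ∧ descentIntegral a c X = 0}.encard := by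
  have h1a : 1 - a ≠ 0 := (sub_pos.2 ha.2).ne'
  have himage : {x | 0 < x ∧ wright (-a) (1 - c) (-x) = 0} =
      (· ^ (1 - a)) '' {X | 0 < X ∧ descentIntegral a c X = 0} := by
    have hiff : ∀ {X : ℝ}, 0 < X →
        (descentIntegral a c X = 0 ↔ wright (-a) (1 - c) (-X ^ (1 - a)) = 0) := fun hX ↦ by
      rw [descentIntegral_eq_wright ha hc hX, mul_eq_zero_iff_left (by positivity)]
    refine Subset.antisymm (fun x ⟨hx, hzero⟩ ↦ ?_) ?_
    · have hroot : (x ^ (1 - a)⁻¹) ^ (1 - a) = x := rpow_inv_rpow hx.le h1a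
      have hX := rpow_pos_of_pos hx (1 - a)⁻¹
      exact ⟨x ^ (1 - a)⁻¹, ⟨hX, (hiff hX).2 (by rwa [hroot])⟩, hroot⟩
    · rintro _ ⟨X, ⟨hX, hzero⟩, rfl⟩
      exact ⟨rpow_pos_of_pos hX _, (hiff hX).1 hzero⟩
  rw [himage]
  exact InjOn.encard_image fun X hX Y hY ↦ (rpow_left_inj hX.1.le hY.1.le h1a).1

end Count

theorem wright_positive_zeroes_general {ρ β : ℝ} (hρ : ρ ∈ Ioo (-1) 0) (hβ : β < 1) :
    {x : ℝ | 0 < x ∧ wright ρ β (-x) = 0}.encard = ⌈-β⌉₊ := by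
  have ha : -ρ ∈ Ioo 0 1 := ⟨neg_pos.2 hρ.2, neg_lt.1 hρ.1⟩
  have hcount := encard_zeros_wright ha (sub_pos.2 hβ)
  rw [neg_neg, sub_sub_cancel] at hcount
  rw [hcount]
  refine encard_zeros_descentIntegral ha ?_ ?_
  · rcases le_or_gt 0 (-β) with h | h
    · linarith [Nat.ceil_lt_add_one h]
    · rw [Nat.ceil_eq_zero.2 h.le, Nat.cast_zero]
      exact sub_pos.2 hβ
  · linarith [Nat.le_ceil (-β)]

/-- Proposition 2: for `ρ ∈ (-1, -1/2]`, the Wright function `x ↦ φ(ρ, β, -x)` has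
exactly one positive zero when `β ∈ [-1, 0)` and exactly two when `β ∈ [2ρ, -1)`. -/
theorem wright_positive_zeroes (ρ : ℝ) (hρ : ρ ∈ Set.Ioc (-1 : ℝ) (-1/2 : ℝ)) (β : ℝ) :
    (β ∈ Set.Ico (-1 : ℝ) 0 →
      {x : ℝ | 0 < x ∧ wright ρ β (-x) = 0}.ncard = 1) ∧
    (β ∈ Set.Ico (2 * ρ) (-1 : ℝ) →
      {x : ℝ | 0 < x ∧ wright ρ β (-x) = 0}.ncard = 2) := by
  have hcount : β < 0 → {x : ℝ | 0 < x ∧ wright ρ β (-x) = 0}.ncard = ⌈-β⌉₊ := fun hβ ↦ by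
    rw [ncard_def, wright_positive_zeroes_general ⟨hρ.1, by linarith [hρ.2]⟩ (by linarith),
      ENat.toNat_natCast]
  refine ⟨fun hβ ↦ ?_, fun hβ ↦ ?_⟩
  · rw [hcount hβ.2, Nat.ceil_eq_iff one_ne_zero]
    constructor <;> norm_num <;> linarith [hβ.1, hβ.2]
  · rw [hcount (hβ.2.trans (by norm_num)), Nat.ceil_eq_iff two_ne_zero]
    constructor <;> norm_num <;> linarith [hβ.1, hβ.2, hρ.1]
end

section
/- For every α ∈ (0,1), every β ≥ 0 and every x ≥ 0, one has the Turán-type inequality φ(-α, β + α, -x) · φ(-α, β − α, -x) ≤ φ(-α, β, -x)². -/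
/-!
Expanding `(1 - (1 - X)^α)^n` by the binomial theorem and using
`[X^N] (1 - X)^(-s) ∼ N^(s - 1) / Γ(s)`, dominated convergence shows that `φ(-α, s, -x)` is the
limit of `N^(1 - s) T_n(s)`, where `n = ⌊x N^α⌋` and
`T_n(s) = [X^N] (1 - (1 - X)^α)^n (1 - X)^(-s)`. Since `T_{n+1}(s) = T_n(s) - T_n(s - α)`, the
Turán inequality for `T_n` at `β` says exactly that `n ↦ T_n(β + α)` is log-concave.

Write `γ = β + α` and split `T_n(γ)` into the masses
`q_n(i) = [X^(N - i)] (1 - (1 - X)^α)^n · [X^i] (1 - X)^(-γ)`. The step from `q_n` to `q_{n+1}` is a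
positive kernel, because `1 - (1 - X)^α` has nonnegative coefficients. For `γ ≥ α` this kernel
preserves the hazard-rate order, in which `q_1 ≤ q_0`, so `q_{n+1} ≤ q_n` for all `n`. Since
`T_{n+1}(γ) = ∑ q_n(i) C(i)` with `C` increasing, `T_{n+2} / T_{n+1} ≤ T_{n+1} / T_n` follows.
-/

open Filter Finset PowerSeries Topology

section HazardRate

variable {R : Type*} [CommRing R]

/-- The mass that `q` gives to `[a, M)`. -/
def tailSum (M : ℕ) (q : ℕ → R) (a : ℕ) : R :=
  ∑ i ∈ Ico a M, q i

variable {M : ℕ} {q q' : ℕ → R}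

lemma tailSum_eq_add_tailSum_succ {a : ℕ} (ha : a < M) :
    tailSum M q a = q a + tailSum M q (a + 1) :=
  sum_eq_sum_Ico_succ_bot ha q

lemma tailSum_of_le {a : ℕ} (ha : M ≤ a) : tailSum M q a = 0 := by
  simp [tailSum, Ico_eq_empty_of_le ha]

lemma mul_tailSum_sub_mul_tailSum (c d : R) (a : ℕ) :
    tailSum M (fun i ↦ c * q i - d * q' i) a = c * tailSum M q a - d * tailSum M q' a := by
  simp only [tailSum, sum_sub_distrib, mul_sum]

variable [LinearOrder R]

/-- The hazard-rate order `q' ≤ q` between masses on `[0, M)`: the hazard rates `q' a / tail q' a`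
dominate those of `q`. It is encoded without division, by comparing the atom at `a` with every tail
strictly beyond `a`. -/
def HazardRateLE (M : ℕ) (q' q : ℕ → R) : Prop :=
  ∀ a k, a < k → tailSum M q' k * q a ≤ q' a * tailSum M q k

variable [IsStrictOrderedRing R]

lemma tailSum_nonneg (hq : ∀ i, 0 ≤ q i) (a : ℕ) : 0 ≤ tailSum M q a :=
  sum_nonneg fun i _ ↦ hq i

lemma antitone_tailSum (hq : ∀ i, 0 ≤ q i) : Antitone (tailSum M q) := fun _ _ hab ↦
  sum_le_sum_of_subset_of_nonneg (Ico_subset_Ico_left hab) fun i _ _ ↦ hq i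

lemma tailSum_mul_nonneg {r f : ℕ → R} {a : ℕ} (hr : ∀ k, a ≤ k → 0 ≤ tailSum M r k)
    (hf : Monotone f) (ha : 0 ≤ f a) : 0 ≤ tailSum M (fun i ↦ r i * f i) a := by
  rcases le_or_gt M a with haM | haM
  · exact (tailSum_of_le haM).ge
  -- Peel the constant `f a` off `f`: what remains vanishes at `a` and is again monotone.
  have hpeel : tailSum M (fun i ↦ r i * f i) a =
      f a * tailSum M r a + tailSum M (fun i ↦ r i * (f i - f a)) (a + 1) :=
    calc tailSum M (fun i ↦ r i * f i) a
        = f a * tailSum M r a + tailSum M (fun i ↦ r i * (f i - f a)) a := by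
          simp only [tailSum, mul_sum, ← sum_add_distrib]
          exact sum_congr rfl fun i _ ↦ by ring
      _ = _ := by
          rw [tailSum_eq_add_tailSum_succ (q := fun i ↦ r i * (f i - f a)) haM, sub_self, mul_zero,
            zero_add]
  have hrest : 0 ≤ tailSum M (fun i ↦ r i * (f i - f a)) (a + 1) :=
    tailSum_mul_nonneg (fun k hk ↦ hr k (a.le_succ.trans hk))
      (fun i j hij ↦ sub_le_sub_right (hf hij) _) (sub_nonneg.2 (hf a.le_succ))
  rw [hpeel]
  exact add_nonneg (mul_nonneg ha (hr a le_rfl)) hrest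
termination_by M - a

namespace HazardRateLE

lemma tailSum_mul_tailSum_le (h : HazardRateLE M q' q) {a b : ℕ} (hab : a ≤ b) :
    tailSum M q' b * tailSum M q a ≤ tailSum M q' a * tailSum M q b := by
  induction hab using Nat.decreasingInduction with
  | self => exact le_rfl
  | of_succ a hab ih =>
    rcases le_or_gt M a with haM | haM
    · simp [tailSum_of_le haM, tailSum_of_le (haM.trans hab.le)]
    · rw [tailSum_eq_add_tailSum_succ haM, tailSum_eq_add_tailSum_succ haM, mul_add, add_mul]
      exact add_le_add (h a b hab) ih

lemma mul_right (h : HazardRateLE M q' q) {f : ℕ → R} (hf : Monotone f) (hf0 : 0 ≤ f 0) :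
    HazardRateLE M (fun i ↦ q' i * f i) (fun i ↦ q i * f i) := by
  intro a k hak
  have hfa : ∀ i, 0 ≤ f i := fun i ↦ hf0.trans (hf i.zero_le)
  have htail := tailSum_mul_nonneg (M := M) (r := fun i ↦ q' a * q i - q a * q' i) (a := k)
    (fun l hl ↦ by
      rw [mul_tailSum_sub_mul_tailSum, sub_nonneg, mul_comm (q a)]
      exact h a l (hak.trans_le hl)) hf (hfa k)
  simp only [sub_mul, mul_assoc, mul_tailSum_sub_mul_tailSum] at htail
  linear_combination mul_le_mul_of_nonneg_left htail (hfa a)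

lemma tailSum_mul_le (h : HazardRateLE M q' q) {ρ : ℕ → R} (hρ : Monotone ρ) (hρ0 : 0 ≤ ρ 0) :
    tailSum M (fun i ↦ q' i * ρ i) 0 * tailSum M q 0 ≤
      tailSum M q' 0 * tailSum M (fun i ↦ q i * ρ i) 0 := by
  have htail := tailSum_mul_nonneg (M := M)
    (r := fun i ↦ tailSum M q' 0 * q i - tailSum M q 0 * q' i) (a := 0)
    (fun l _ ↦ by
      rw [mul_tailSum_sub_mul_tailSum, sub_nonneg, mul_comm (tailSum M q 0)]
      exact h.tailSum_mul_tailSum_le l.zero_le) hρ hρ0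
  simp only [sub_mul, mul_assoc, mul_tailSum_sub_mul_tailSum] at htail
  linear_combination htail

lemma of_tailSum_succ (hq : ∀ i, 0 ≤ q i) (hnull : ∀ j, tailSum M q j = 0 → tailSum M q' j = 0)
    (h : ∀ j, tailSum M q' (j + 1) * tailSum M q j ≤ tailSum M q' j * tailSum M q (j + 1)) :
    HazardRateLE M q' q := by
  intro a k hak
  rcases le_or_gt M a with haM | haM
  · simp [tailSum_of_le (haM.trans hak.le)]
  induction k, hak using Nat.le_induction with
  | base =>
    have ha := h a
    rw [tailSum_eq_add_tailSum_succ haM, tailSum_eq_add_tailSum_succ haM] at ha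
    linear_combination ha
  | succ k _ ih =>
    rcases (tailSum_nonneg (M := M) hq k).eq_or_lt with hk | hk
    · have hk' : tailSum M q (k + 1) = 0 :=
        le_antisymm (hk ▸ antitone_tailSum hq k.le_succ) (tailSum_nonneg hq _)
      simp [hk', hnull _ hk']
    · refine le_of_mul_le_mul_right ?_ hk
      calc tailSum M q' (k + 1) * q a * tailSum M q k
          = tailSum M q' (k + 1) * tailSum M q k * q a := by ring
        _ ≤ tailSum M q' k * tailSum M q (k + 1) * q a := mul_le_mul_of_nonneg_right (h k) (hq a)
        _ = tailSum M q' k * q a * tailSum M q (k + 1) := by ring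
        _ ≤ q' a * tailSum M q k * tailSum M q (k + 1) :=
            mul_le_mul_of_nonneg_right ih (tailSum_nonneg hq _)
        _ = q' a * tailSum M q (k + 1) * tailSum M q k := by ring

end HazardRateLE

/-- A kernel, with quotients `ρ i j = C i (j + 1) / C i j`, that preserves the hazard-rate order
when it turns the mass `q` into the mass whose tail at `j` is `∑ i, q i * C i j`. -/
structure IsHazardKernel (C ρ : ℕ → ℕ → R) : Prop where
  eq_zero_of_le : ∀ i j, i ≤ j → C i j = 0
  monotone : ∀ j, Monotone (C · j)
  apply_succ : ∀ i j, C i (j + 1) = C i j * ρ i j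
  monotone_ratio : ∀ j, Monotone (ρ · j)
  ratio_zero_nonneg : ∀ j, 0 ≤ ρ 0 j

namespace IsHazardKernel

variable {C ρ : ℕ → ℕ → R}

lemma tailSum_eq_zero (hC : IsHazardKernel C ρ) (hq : ∀ i, 0 ≤ q i)
    (hstep : ∀ j, tailSum M q' j = tailSum M (fun i ↦ q i * C i j) 0) {j : ℕ}
    (hj : tailSum M q j = 0) : tailSum M q' j = 0 := by
  rw [hstep]
  refine sum_eq_zero fun i hi ↦ ?_
  rcases le_total i j with hij | hij
  · rw [hC.eq_zero_of_le i j hij, mul_zero]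
  · have hi' : i ∈ Ico j M := mem_Ico.2 ⟨hij, (mem_Ico.1 hi).2⟩
    rw [(sum_eq_zero_iff_of_nonneg fun i _ ↦ hq i).1 hj i hi', zero_mul]

variable {q : ℕ → ℕ → R}

lemma hazardRateLE_succ (hC : IsHazardKernel C ρ) (hq : ∀ n i, 0 ≤ q n i)
    (hstep : ∀ n j, tailSum M (q (n + 1)) j = tailSum M (fun i ↦ q n i * C i j) 0)
    (hbase : HazardRateLE M (q 1) (q 0)) (n : ℕ) : HazardRateLE M (q (n + 1)) (q n) := by
  induction n with
  | zero => exact hbase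
  | succ n ih =>
    refine .of_tailSum_succ (hq _) (fun j ↦ hC.tailSum_eq_zero (hq _) (hstep _)) fun j ↦ ?_
    have hweighted := ih.mul_right (hC.monotone j) (hC.eq_zero_of_le 0 j j.zero_le).ge
    rw [hstep, hstep, hstep, hstep]
    simpa only [hC.apply_succ, mul_assoc] using
      hweighted.tailSum_mul_le (hC.monotone_ratio j) (hC.ratio_zero_nonneg j)

theorem tailSum_logConcave (hC : IsHazardKernel C ρ) (hq : ∀ n i, 0 ≤ q n i)
    (hstep : ∀ n j, tailSum M (q (n + 1)) j = tailSum M (fun i ↦ q n i * C i j) 0)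
    (hbase : HazardRateLE M (q 1) (q 0)) (n : ℕ) :
    tailSum M (q (n + 2)) 0 * tailSum M (q n) 0 ≤ tailSum M (q (n + 1)) 0 ^ 2 := by
  have hle := (hC.hazardRateLE_succ hq hstep hbase n).tailSum_mul_le (hC.monotone 0)
    (hC.eq_zero_of_le 0 0 le_rfl).ge
  rwa [← hstep, ← hstep, ← sq] at hle

end IsHazardKernel

end HazardRate

section NegBinomial

lemma succ_mul_multichoose_succ {R : Type*} [CommRing R] [BinomialRing R] (r : R) (n : ℕ) :
    (n + 1) * Ring.multichoose r (n + 1) = (r + n) * Ring.multichoose r n := by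
  have := BinomialRing.toIsAddTorsionFree (R := R)
  have h (m : ℕ) := Ring.factorial_nsmul_multichoose_eq_ascPochhammer r m
  refine nsmul_right_injective n.factorial_ne_zero ?_
  have hsucc := h (n + 1)
  rw [ascPochhammer_succ_right, Polynomial.smeval_mul, ← h, Polynomial.smeval_add,
    Polynomial.smeval_X, Polynomial.smeval_natCast, n.factorial_succ] at hsucc
  simp only [nsmul_eq_mul, pow_one, pow_zero, mul_one] at hsucc ⊢
  push_cast at hsucc
  linear_combination hsucc

/-- The power series `(1 - X) ^ (-s)`. -/
noncomputable def negBinomialSeries {R : Type*} [CommRing R] [BinomialRing R] (s : R) : R⟦X⟧ :=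
  rescale (-1) (binomialSeries R (-s))

namespace negBinomialSeries

variable {R : Type*} [CommRing R] [BinomialRing R]

lemma coeff_eq_multichoose (s : R) (n : ℕ) :
    coeff n (negBinomialSeries s) = Ring.multichoose s n := by
  rw [negBinomialSeries, coeff_rescale, binomialSeries_coeff, Ring.choose_neg', Units.smul_def,
    Int.coe_negOnePow_natCast]
  simp [← mul_assoc, ← mul_pow]

lemma add (s t : R) :
    negBinomialSeries (s + t) = negBinomialSeries s * negBinomialSeries t := by
  rw [negBinomialSeries, neg_add, binomialSeries_add, map_mul, negBinomialSeries, negBinomialSeries]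

lemma pow (s : R) (n : ℕ) : negBinomialSeries s ^ n = negBinomialSeries (n * s) := by
  induction n with
  | zero => simp [negBinomialSeries]
  | succ n ih => rw [pow_succ, ih, ← add, Nat.cast_succ, add_one_mul]

end negBinomialSeries

lemma multichoose_succ (s : ℝ) (n : ℕ) :
    Ring.multichoose s (n + 1) = Ring.multichoose s n * ((s + n) / (n + 1)) := by
  have := succ_mul_multichoose_succ s n
  field_simp
  linear_combination this

lemma multichoose_pos {s : ℝ} (hs : 0 < s) (n : ℕ) : 0 < Ring.multichoose s n := by
  induction n with
  | zero => simp
  | succ n ih => rw [multichoose_succ]; positivity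

lemma multichoose_nonneg {s : ℝ} (hs : 0 ≤ s) (n : ℕ) : 0 ≤ Ring.multichoose s n := by
  induction n with
  | zero => simp
  | succ n ih => rw [multichoose_succ]; positivity

lemma multichoose_le_multichoose {s t : ℝ} (hs : 0 ≤ s) (hst : s ≤ t) (n : ℕ) :
    Ring.multichoose s n ≤ Ring.multichoose t n := by
  induction n with
  | zero => simp
  | succ n ih =>
    have := multichoose_nonneg (hs.trans hst) n
    rw [multichoose_succ, multichoose_succ]
    gcongr

lemma antitone_multichoose_div_multichoose {s t : ℝ} (hs : 0 ≤ s) (ht : 0 < t) (hst : s ≤ t) :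
    Antitone fun n ↦ Ring.multichoose s n / Ring.multichoose t n := by
  refine antitone_nat_of_succ_le fun n ↦ ?_
  have hs' := multichoose_nonneg hs n
  have ht' := multichoose_pos ht n
  rw [multichoose_succ, multichoose_succ, mul_div_mul_comm]
  refine mul_le_of_le_one_right (by positivity) ?_
  rw [div_div_div_cancel_right₀ (by positivity), div_le_one (by positivity)]
  gcongr

lemma monotone_multichoose_shift_div_multichoose {s t : ℝ} (hs : 0 < s) (hs1 : s ≤ 1)
    (hst : s ≤ t) (j : ℕ) :
    Monotone fun n ↦ Ring.multichoose t (j + n) / Ring.multichoose s n := by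
  refine monotone_nat_of_le_succ fun n ↦ ?_
  have hs' := multichoose_pos hs n
  have ht' := multichoose_pos (hs.trans_le hst) (j + n)
  rw [← add_assoc, multichoose_succ, multichoose_succ, mul_div_mul_comm]
  refine le_mul_of_one_le_right (by positivity) ?_
  rw [one_le_div (by positivity), div_le_div_iff₀ (by positivity) (by positivity)]
  have : (0 : ℝ) ≤ j := j.cast_nonneg
  have : (0 : ℝ) ≤ n := n.cast_nonneg
  push_cast
  nlinarith

end NegBinomial

section Sibuya

/-- The power series `1 - (1 - X) ^ α`. For `0 < α < 1` it is the generating function of the Sibuya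
distribution, whose scaling limit is the `α`-stable subordinator. -/
noncomputable def sibuyaSeries (α : ℝ) : ℝ⟦X⟧ :=
  1 - negBinomialSeries (-α)

/-- The Sibuya probability of the value `m`. -/
noncomputable def sibuyaMass (α : ℝ) (m : ℕ) : ℝ :=
  coeff m (sibuyaSeries α)

lemma sibuyaMass_zero (α : ℝ) : sibuyaMass α 0 = 0 := by
  rw [sibuyaMass, sibuyaSeries, map_sub, negBinomialSeries.coeff_eq_multichoose]
  simp

lemma sibuyaMass_of_ne_zero (α : ℝ) {m : ℕ} (hm : m ≠ 0) :
    sibuyaMass α m = -Ring.multichoose (-α) m := by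
  simp [sibuyaMass, sibuyaSeries, coeff_one, hm, negBinomialSeries.coeff_eq_multichoose]

lemma sibuyaMass_succ (α : ℝ) {m : ℕ} (hm : m ≠ 0) :
    sibuyaMass α (m + 1) = sibuyaMass α m * ((m - α) / (m + 1)) := by
  rw [sibuyaMass_of_ne_zero α hm, sibuyaMass_of_ne_zero α m.succ_ne_zero, multichoose_succ]
  ring

variable {α : ℝ}

lemma sibuyaMass_pos (h0 : 0 < α) (h1 : α < 1) {m : ℕ} (hm : m ≠ 0) : 0 < sibuyaMass α m := by
  induction m, Nat.one_le_iff_ne_zero.2 hm using Nat.le_induction with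
  | base => simpa [sibuyaMass_of_ne_zero]
  | succ m hm1 ih =>
    have hm' : (1 : ℝ) ≤ m := by exact_mod_cast hm1
    have hmα : 0 < (m : ℝ) - α := by linarith
    rw [sibuyaMass_succ α (by lia)]
    have := ih (by lia)
    positivity

lemma sibuyaMass_nonneg (h0 : 0 < α) (h1 : α < 1) (m : ℕ) : 0 ≤ sibuyaMass α m := by
  rcases eq_or_ne m 0 with rfl | hm
  · exact (sibuyaMass_zero α).ge
  · exact (sibuyaMass_pos h0 h1 hm).le

lemma sub_div_add_one_le (hα : 0 ≤ α) {m n : ℕ} (hmn : m ≤ n) :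
    ((m : ℝ) - α) / (m + 1) ≤ (n - α) / (n + 1) := by
  have : (m : ℝ) ≤ n := by exact_mod_cast hmn
  rw [div_le_div_iff₀ (by positivity) (by positivity)]
  nlinarith

lemma sibuyaMass_mul_succ_le (h0 : 0 < α) (h1 : α < 1) {m n : ℕ} (hm : m ≠ 0) (hmn : m ≤ n) :
    sibuyaMass α n * sibuyaMass α (m + 1) ≤ sibuyaMass α (n + 1) * sibuyaMass α m := by
  rw [sibuyaMass_succ α hm, sibuyaMass_succ α (by lia : n ≠ 0)]
  have := sibuyaMass_nonneg h0 h1 m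
  have := sibuyaMass_nonneg h0 h1 n
  calc sibuyaMass α n * (sibuyaMass α m * ((m - α) / (m + 1)))
      = sibuyaMass α n * sibuyaMass α m * ((m - α) / (m + 1)) := by ring
    _ ≤ sibuyaMass α n * sibuyaMass α m * ((n - α) / (n + 1)) := by
        gcongr ?_ * ?_
        exact sub_div_add_one_le h0.le hmn
    _ = sibuyaMass α n * ((n - α) / (n + 1)) * sibuyaMass α m := by ring

lemma sibuyaMass_div_multichoose_succ_le {γ : ℝ} (h0 : 0 < α) (h1 : α < 1) (hγ : 0 < γ)
    {l i : ℕ} (hli : l < i) :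
    sibuyaMass α (i + 1 - l) / Ring.multichoose γ (i + 1) ≤
      sibuyaMass α (i - l) / Ring.multichoose γ i := by
  have := sibuyaMass_nonneg h0 h1 (i - l)
  have := multichoose_pos hγ i
  rw [Nat.succ_sub hli.le, sibuyaMass_succ α (by lia), multichoose_succ, mul_div_mul_comm]
  refine mul_le_of_le_one_right (by positivity) ?_
  rw [div_le_one (by positivity)]
  refine (sub_div_add_one_le h0.le (i.sub_le l)).trans ?_
  gcongr
  linarith

/-- The tail over `l ≥ j` of the terms `[X^l] (1 - X)^(-γ) * [X^(i - l)] (1 - (1 - X)^α)` of the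
`i`-th coefficient of the product. The term `l = i` vanishes. -/
noncomputable def sibuyaTail (α γ : ℝ) (i j : ℕ) : ℝ :=
  ∑ l ∈ Ico j (i + 1), Ring.multichoose γ l * sibuyaMass α (i - l)

lemma sibuyaTail_of_le (α γ : ℝ) {i j : ℕ} (hij : i ≤ j) : sibuyaTail α γ i j = 0 := by
  refine sum_eq_zero fun l hl ↦ ?_
  rw [Nat.sub_eq_zero_of_le (hij.trans (mem_Ico.1 hl).1), sibuyaMass_zero, mul_zero]

lemma sibuyaTail_zero_right (α γ : ℝ) (i : ℕ) :
    sibuyaTail α γ i 0 = Ring.multichoose γ i - Ring.multichoose (γ - α) i := by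
  have hprod : negBinomialSeries γ * sibuyaSeries α =
      negBinomialSeries γ - negBinomialSeries (γ - α) := by
    rw [sibuyaSeries, mul_sub, mul_one, ← negBinomialSeries.add, ← sub_eq_add_neg]
  have hcoeff := congrArg (coeff i) hprod
  rw [coeff_mul, Nat.sum_antidiagonal_eq_sum_range_succ_mk, map_sub] at hcoeff
  simpa only [negBinomialSeries.coeff_eq_multichoose, range_eq_Ico, sibuyaTail, sibuyaMass]
    using hcoeff

lemma sibuyaTail_eq_sub (α γ : ℝ) {i j : ℕ} (hji : j ≤ i) :
    sibuyaTail α γ i j = Ring.multichoose γ i - Ring.multichoose (γ - α) i -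
      ∑ l ∈ range j, Ring.multichoose γ l * sibuyaMass α (i - l) := by
  rw [← sibuyaTail_zero_right, sibuyaTail, sibuyaTail, ← range_eq_Ico,
    ← sum_range_add_sum_Ico _ (hji.trans i.le_succ), add_sub_cancel_left]

lemma sibuyaTail_eq_add_succ (α γ : ℝ) {i j : ℕ} (hji : j ≤ i) :
    sibuyaTail α γ i j = Ring.multichoose γ j * sibuyaMass α (i - j) + sibuyaTail α γ i (j + 1) :=
  sum_eq_sum_Ico_succ_bot (Nat.lt_succ_of_le hji) _

variable {γ : ℝ}

lemma sibuyaTail_nonneg (h0 : 0 < α) (h1 : α < 1) (hγ : 0 ≤ γ) (i j : ℕ) :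
    0 ≤ sibuyaTail α γ i j :=
  sum_nonneg fun l _ ↦ mul_nonneg (multichoose_nonneg hγ l) (sibuyaMass_nonneg h0 h1 _)

lemma sibuyaTail_pos (h0 : 0 < α) (h1 : α < 1) (hγ : 0 < γ) {i j : ℕ} (hji : j < i) :
    0 < sibuyaTail α γ i j := by
  rw [sibuyaTail_eq_add_succ α γ hji.le]
  exact add_pos_of_pos_of_nonneg
    (mul_pos (multichoose_pos hγ j) (sibuyaMass_pos h0 h1 (Nat.sub_ne_zero_of_lt hji)))
    (sibuyaTail_nonneg h0 h1 hγ.le i (j + 1))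

lemma monotone_sibuyaTail_div_multichoose (h0 : 0 < α) (h1 : α < 1) (hγ : α ≤ γ) (j : ℕ) :
    Monotone fun i ↦ sibuyaTail α γ i j / Ring.multichoose γ i := by
  have hγ0 : 0 < γ := h0.trans_le hγ
  refine monotone_nat_of_le_succ fun i ↦ ?_
  rcases lt_or_ge i j with hij | hji
  · rw [sibuyaTail_of_le α γ hij.le, zero_div]
    exact div_nonneg (sibuyaTail_nonneg h0 h1 hγ0.le _ _) (multichoose_nonneg hγ0.le _)
  have hsplit : ∀ i, j ≤ i → sibuyaTail α γ i j / Ring.multichoose γ i =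
      1 - Ring.multichoose (γ - α) i / Ring.multichoose γ i -
        ∑ l ∈ range j, Ring.multichoose γ l * (sibuyaMass α (i - l) / Ring.multichoose γ i) := by
    intro i hi
    have := (multichoose_pos hγ0 i).ne'
    rw [sibuyaTail_eq_sub α γ hi, sub_div, sub_div, div_self this, sum_div]
    simp only [mul_div_assoc]
  rw [hsplit i hji, hsplit (i + 1) (hji.trans i.le_succ)]
  refine sub_le_sub (sub_le_sub_left ?_ _) (sum_le_sum fun l hl ↦ mul_le_mul_of_nonneg_left ?_ ?_)
  · exact antitone_multichoose_div_multichoose (sub_nonneg.2 hγ) hγ0 (by linarith) i.le_succ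
  · exact sibuyaMass_div_multichoose_succ_le h0 h1 hγ0 ((mem_range.1 hl).trans_le hji)
  · exact multichoose_nonneg hγ0.le l

lemma sibuyaMass_succ_mul_sibuyaTail_zero_le (h0 : 0 < α) (h1 : α < 1) (hγ : α ≤ γ) {d : ℕ}
    (hd : d ≠ 0) :
    sibuyaMass α (d + 1) * sibuyaTail α γ d 0 ≤ sibuyaMass α d * sibuyaTail α γ (d + 1) 0 := by
  have hw := sibuyaMass_nonneg h0 h1 d
  have hle := multichoose_le_multichoose (sub_nonneg.2 hγ) (sub_le_self γ h0.le) d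
  have hnn := multichoose_nonneg (sub_nonneg.2 hγ) d
  rw [sibuyaTail_zero_right, sibuyaTail_zero_right, sibuyaMass_succ α hd, multichoose_succ,
    multichoose_succ, mul_assoc]
  refine mul_le_mul_of_nonneg_left ?_ hw
  rw [div_mul_eq_mul_div, mul_div_assoc', mul_div_assoc', ← sub_div]
  gcongr
  nlinarith

lemma sum_mul_sibuyaMass_sub_nonneg (h0 : 0 < α) (h1 : α < 1) (hγ : α ≤ γ) {ρ : ℕ → ℝ}
    (hρ : Monotone ρ) (hρ0 : 0 ≤ ρ 0) {d : ℕ} (hd : d ≠ 0) :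
    0 ≤ ∑ l ∈ range (d + 1), ρ l * (Ring.multichoose γ l *
      (sibuyaMass α d * sibuyaMass α (d + 1 - l) -
        sibuyaMass α (d + 1) * sibuyaMass α (d - l))) := by
  set r : ℕ → ℝ := fun l ↦ Ring.multichoose γ l *
    (sibuyaMass α d * sibuyaMass α (d + 1 - l) - sibuyaMass α (d + 1) * sibuyaMass α (d - l))
  have hr_sum : ∑ l ∈ range (d + 1), r l =
      sibuyaMass α d * sibuyaTail α γ (d + 1) 0 - sibuyaMass α (d + 1) * sibuyaTail α γ d 0 := by
    rw [sibuyaTail, sibuyaTail, ← range_eq_Ico, ← range_eq_Ico, sum_range_succ _ (d + 1),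
      Nat.sub_self, sibuyaMass_zero, mul_zero, add_zero, mul_sum, mul_sum, ← sum_sub_distrib]
    exact sum_congr rfl fun l _ ↦ by ring
  have hr_nonpos : ∀ l < d, r l ≤ 0 := fun l hl ↦ by
    refine mul_nonpos_of_nonneg_of_nonpos (multichoose_nonneg (h0.le.trans hγ) l) (sub_nonpos.2 ?_)
    rw [Nat.succ_sub hl.le]
    exact sibuyaMass_mul_succ_le h0 h1 (Nat.sub_ne_zero_of_lt hl) (d.sub_le l)
  -- Only the last term can be positive, so the increasing weights can be frozen at `ρ d`.
  calc (0 : ℝ) ≤ ρ d * ∑ l ∈ range (d + 1), r l := by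
        refine mul_nonneg (hρ0.trans (hρ d.zero_le)) ?_
        rw [hr_sum]
        exact sub_nonneg.2 (sibuyaMass_succ_mul_sibuyaTail_zero_le h0 h1 hγ hd)
    _ ≤ ∑ l ∈ range (d + 1), ρ l * r l := by
        rw [mul_sum]
        refine sum_le_sum fun l hl ↦ ?_
        rcases (Nat.lt_succ_iff.1 (mem_range.1 hl)).lt_or_eq with hld | rfl
        · exact mul_le_mul_of_nonpos_right (hρ hld.le) (hr_nonpos l hld)
        · exact le_rfl

lemma sibuyaMass_succ_mul_sibuyaTail_le (h0 : 0 < α) (h1 : α < 1) (hγ : α ≤ γ) {i j : ℕ}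
    (hji : j < i) :
    sibuyaMass α (i + 1 - j) * sibuyaTail α γ i j ≤
      sibuyaMass α (i - j) * sibuyaTail α γ (i + 1) j := by
  obtain ⟨d, rfl⟩ := Nat.exists_eq_add_of_le hji.le
  have hγ0 : 0 < γ := h0.trans_le hγ
  -- Capping the exponent at `1` makes the quotient of coefficients increase.
  set δ := min γ 1
  have hδ0 : 0 < δ := lt_min hγ0 one_pos
  have hαδ : α ≤ δ := le_min hγ h1.le
  have hsum := sum_mul_sibuyaMass_sub_nonneg h0 h1 hαδ
    (monotone_multichoose_shift_div_multichoose hδ0 (min_le_right γ 1) (min_le_left γ 1) j)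
    (div_nonneg (multichoose_nonneg hγ0.le _) (multichoose_nonneg hδ0.le _))
    (by lia : d ≠ 0)
  have htail : ∀ m, sibuyaTail α γ (j + m) j =
      ∑ l ∈ range (m + 1), Ring.multichoose γ (j + l) * sibuyaMass α (m - l) := fun m ↦ by
    rw [sibuyaTail, sum_Ico_eq_sum_range, add_assoc, Nat.add_sub_cancel_left]
    simp only [Nat.add_sub_add_left]
  rw [add_assoc, htail, htail, sum_range_succ _ (d + 1), Nat.sub_self, sibuyaMass_zero, mul_zero,
    add_zero, Nat.add_sub_cancel_left, Nat.add_sub_cancel_left, ← sub_nonneg, mul_sum, mul_sum,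
    ← sum_sub_distrib]
  refine hsum.trans_eq (sum_congr rfl fun l _ ↦ ?_)
  have := (multichoose_pos hδ0 l).ne'
  field_simp

lemma monotone_sibuyaTail_succ_div_sibuyaTail (h0 : 0 < α) (h1 : α < 1) (hγ : α ≤ γ) (j : ℕ) :
    Monotone fun i ↦ sibuyaTail α γ i (j + 1) / sibuyaTail α γ i j := by
  have hγ0 : 0 < γ := h0.trans_le hγ
  refine monotone_nat_of_le_succ fun i ↦ ?_
  rcases le_or_gt i j with hij | hji
  · rw [sibuyaTail_of_le α γ (hij.trans j.le_succ), zero_div]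
    exact div_nonneg (sibuyaTail_nonneg h0 h1 hγ0.le _ _) (sibuyaTail_nonneg h0 h1 hγ0.le _ _)
  rw [div_le_div_iff₀ (sibuyaTail_pos h0 h1 hγ0 hji)
    (sibuyaTail_pos h0 h1 hγ0 (hji.trans i.lt_succ_self))]
  have hi := sibuyaTail_eq_add_succ α γ hji.le
  have hi' := sibuyaTail_eq_add_succ α γ (hji.le.trans i.le_succ)
  have hmass := mul_le_mul_of_nonneg_left (sibuyaMass_succ_mul_sibuyaTail_le h0 h1 hγ hji)
    (multichoose_nonneg hγ0.le j)
  rw [← sub_nonneg] at hmass ⊢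
  refine hmass.trans_eq ?_
  linear_combination sibuyaTail α γ i j * hi' - sibuyaTail α γ (i + 1) j * hi

lemma isHazardKernel_sibuyaTail (h0 : 0 < α) (h1 : α < 1) (hγ : α ≤ γ) :
    IsHazardKernel (fun i j ↦ sibuyaTail α γ i j / Ring.multichoose γ i)
      (fun i j ↦ sibuyaTail α γ i (j + 1) / sibuyaTail α γ i j) where
  eq_zero_of_le i j hij := by simp [sibuyaTail_of_le α γ hij]
  monotone := monotone_sibuyaTail_div_multichoose h0 h1 hγ
  apply_succ i j := by
    rcases le_or_gt i j with hij | hji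
    · simp [sibuyaTail_of_le α γ hij, sibuyaTail_of_le α γ (hij.trans j.le_succ)]
    · have := (sibuyaTail_pos h0 h1 (h0.trans_le hγ) hji).ne'
      field_simp
  monotone_ratio := monotone_sibuyaTail_succ_div_sibuyaTail h0 h1 hγ
  ratio_zero_nonneg j := by simp [sibuyaTail_of_le α γ j.zero_le]

end Sibuya

section DiscreteWright

/-- The coefficient `[X^N] (1 - (1 - X)^α)^n (1 - X)^(-s)`, which after division by `N ^ (s - 1)`
discretises `φ(-α, s, -x)` at `x = n / N ^ α`. -/
noncomputable def discreteWright (α : ℝ) (N n : ℕ) (s : ℝ) : ℝ :=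
  coeff N (sibuyaSeries α ^ n * negBinomialSeries s)

/-- The contribution of `[X^i] (1 - X)^(-s)` to `discreteWright α N n s`. -/
noncomputable def discreteWrightMass (α s : ℝ) (N n i : ℕ) : ℝ :=
  coeff (N - i) (sibuyaSeries α ^ n) * Ring.multichoose s i

lemma discreteWright_succ (α : ℝ) (N n : ℕ) (s : ℝ) :
    discreteWright α N (n + 1) s = discreteWright α N n s - discreteWright α N n (s - α) := by
  rw [discreteWright, discreteWright, discreteWright, ← map_sub, pow_succ, mul_assoc, ← mul_sub,
    sub_eq_neg_add s, negBinomialSeries.add, sibuyaSeries, sub_mul, one_mul]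

lemma discreteWright_eq_tailSum (α : ℝ) (N n : ℕ) (s : ℝ) :
    discreteWright α N n s = tailSum (N + 1) (discreteWrightMass α s N n) 0 := by
  rw [discreteWright, mul_comm, coeff_mul, Nat.sum_antidiagonal_eq_sum_range_succ_mk, range_eq_Ico]
  exact sum_congr rfl fun i _ ↦ by
    rw [negBinomialSeries.coeff_eq_multichoose, discreteWrightMass, mul_comm]

lemma coeff_sibuyaSeries_pow_succ (α : ℝ) {N l : ℕ} (hl : l ≤ N) (n : ℕ) :
    coeff (N - l) (sibuyaSeries α ^ (n + 1)) =
      ∑ i ∈ Ico l (N + 1), sibuyaMass α (i - l) * coeff (N - i) (sibuyaSeries α ^ n) := by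
  rw [pow_succ', coeff_mul, Nat.sum_antidiagonal_eq_sum_range_succ_mk, sum_Ico_eq_sum_range,
    Nat.succ_eq_add_one, ← Nat.sub_add_comm hl]
  exact sum_congr rfl fun i _ ↦ by rw [Nat.add_sub_cancel_left, Nat.sub_sub, sibuyaMass]

variable {α γ : ℝ}

lemma coeff_sibuyaSeries_pow_nonneg (h0 : 0 < α) (h1 : α < 1) (n m : ℕ) :
    0 ≤ coeff m (sibuyaSeries α ^ n) := by
  induction n generalizing m with
  | zero => rw [pow_zero, coeff_one]; positivity
  | succ n ih =>
    rw [pow_succ, coeff_mul]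
    exact sum_nonneg fun ij _ ↦ mul_nonneg (ih _) (sibuyaMass_nonneg h0 h1 _)

lemma discreteWrightMass_nonneg (h0 : 0 < α) (h1 : α < 1) (hγ : 0 ≤ γ) (N n i : ℕ) :
    0 ≤ discreteWrightMass α γ N n i :=
  mul_nonneg (coeff_sibuyaSeries_pow_nonneg h0 h1 _ _) (multichoose_nonneg hγ _)

lemma tailSum_discreteWrightMass_succ (hγ : 0 < γ) (N n j : ℕ) :
    tailSum (N + 1) (discreteWrightMass α γ N (n + 1)) j =
      tailSum (N + 1)
        (fun i ↦ discreteWrightMass α γ N n i * (sibuyaTail α γ i j / Ring.multichoose γ i)) 0 := by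
  have hterm (i : ℕ) :
      discreteWrightMass α γ N n i * (sibuyaTail α γ i j / Ring.multichoose γ i) =
        coeff (N - i) (sibuyaSeries α ^ n) * sibuyaTail α γ i j := by
    have := (multichoose_pos hγ i).ne'
    rw [discreteWrightMass]
    field_simp
  calc tailSum (N + 1) (discreteWrightMass α γ N (n + 1)) j
      = ∑ l ∈ Ico j (N + 1), ∑ i ∈ Ico l (N + 1), coeff (N - i) (sibuyaSeries α ^ n) *
          (Ring.multichoose γ l * sibuyaMass α (i - l)) := by
        refine sum_congr rfl fun l hl ↦ ?_
        rw [discreteWrightMass, coeff_sibuyaSeries_pow_succ α (Nat.lt_succ_iff.1 (mem_Ico.1 hl).2),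
          sum_mul]
        exact sum_congr rfl fun i _ ↦ by ring
    _ = ∑ i ∈ Ico j (N + 1), coeff (N - i) (sibuyaSeries α ^ n) * sibuyaTail α γ i j := by
        rw [sum_Ico_Ico_comm]
        simp only [sibuyaTail, mul_sum]
    _ = ∑ i ∈ Ico 0 (N + 1), coeff (N - i) (sibuyaSeries α ^ n) * sibuyaTail α γ i j := by
        refine sum_subset (Ico_subset_Ico_left j.zero_le) fun i hi hij ↦ ?_
        rw [sibuyaTail_of_le α γ (by simp only [mem_Ico] at hi hij; lia), mul_zero]
    _ = _ := by simp only [tailSum, hterm]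

lemma hazardRateLE_discreteWrightMass_zero {q : ℕ → ℝ} (hq : ∀ i, 0 ≤ q i) (hγ : 0 ≤ γ) (N : ℕ) :
    HazardRateLE (N + 1) q (discreteWrightMass α γ N 0) := by
  intro a k hak
  rcases le_or_gt N a with hNa | haN
  · rw [tailSum_of_le (hNa.trans_lt hak), tailSum_of_le (hNa.trans_lt hak), zero_mul, mul_zero]
  · have hmass (i : ℕ) : 0 ≤ discreteWrightMass α γ N 0 i := by
      rw [discreteWrightMass, pow_zero, coeff_one]
      exact mul_nonneg (by positivity) (multichoose_nonneg hγ i)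
    have ha : discreteWrightMass α γ N 0 a = 0 := by
      rw [discreteWrightMass, pow_zero, coeff_one, if_neg (Nat.sub_ne_zero_of_lt haN), zero_mul]
    rw [ha, mul_zero]
    exact mul_nonneg (hq a) (tailSum_nonneg hmass k)

theorem discreteWright_logConcave (h0 : 0 < α) (h1 : α < 1) (hγ : α ≤ γ) (N n : ℕ) :
    discreteWright α N (n + 2) γ * discreteWright α N n γ ≤ discreteWright α N (n + 1) γ ^ 2 := by
  have hγ0 : 0 < γ := h0.trans_le hγ
  simp only [discreteWright_eq_tailSum]
  exact (isHazardKernel_sibuyaTail h0 h1 hγ).tailSum_logConcave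
    (discreteWrightMass_nonneg h0 h1 hγ0.le N) (tailSum_discreteWrightMass_succ hγ0 N)
    (hazardRateLE_discreteWrightMass_zero (discreteWrightMass_nonneg h0 h1 hγ0.le N 1) hγ0.le N) n

theorem discreteWright_turan {β : ℝ} (h0 : 0 < α) (h1 : α < 1) (hβ : 0 ≤ β) (N n : ℕ) :
    discreteWright α N n (β + α) * discreteWright α N n (β - α) ≤ discreteWright α N n β ^ 2 := by
  have h := discreteWright_logConcave h0 h1 (le_add_of_nonneg_left hβ) N n
  rw [discreteWright_succ α N (n + 1), discreteWright_succ α N n, discreteWright_succ α N n,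
    add_sub_cancel_right] at h
  linear_combination h

end DiscreteWright

section MultichooseAsymptotics

lemma prod_range_add_eq_factorial_mul_multichoose {R : Type*} [CommRing R] [BinomialRing R] (r : R)
    (n : ℕ) : ∏ j ∈ range n, (r + j) = n.factorial * Ring.multichoose r n := by
  induction n with
  | zero => simp
  | succ n ih =>
    rw [prod_range_succ, ih, Nat.factorial_succ]
    push_cast
    linear_combination -n.factorial * succ_mul_multichoose_succ r n

lemma multichoose_eq_prod_one_sub_div (s : ℝ) (N : ℕ) :
    Ring.multichoose s N = ∏ j ∈ range N, (1 - (1 - s) / (j + 1)) := by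
  induction N with
  | zero => simp
  | succ N ih =>
    rw [prod_range_succ, ← ih, multichoose_succ]
    congr 1
    field_simp
    ring

lemma multichoose_neg_natCast_of_lt {R : Type*} [CommRing R] [BinomialRing R] {m n : ℕ}
    (h : m < n) :
    Ring.multichoose (-(m : R)) n = 0 := by
  simpa [h] using (Ring.map_multichoose (Int.castRingHom R) (-(m : ℤ)) n).symm

lemma multichoose_mul_rpow_eq_inv_GammaSeq_mul {s : ℝ} {N : ℕ} (hN : 0 < N) (hs : (N : ℝ) + s ≠ 0) :
    Ring.multichoose s N * (N : ℝ) ^ (1 - s) = (Real.GammaSeq s N)⁻¹ * (N / (N + s)) := by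
  have hN' : (0 : ℝ) < N := by exact_mod_cast hN
  have := (Real.rpow_pos_of_pos hN' s).ne'
  rw [Real.GammaSeq, prod_range_succ, prod_range_add_eq_factorial_mul_multichoose,
    Real.rpow_sub hN', Real.rpow_one]
  field_simp
  ring

lemma tendsto_multichoose_mul_rpow (s : ℝ) :
    Tendsto (fun N : ℕ ↦ Ring.multichoose s N * (N : ℝ) ^ (1 - s)) atTop (𝓝 (Real.Gamma s)⁻¹) := by
  by_cases hs : ∃ m : ℕ, s = -m
  · obtain ⟨m, rfl⟩ := hs
    rw [(Real.Gamma_eq_zero_iff _).2 ⟨m, rfl⟩, inv_zero]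
    refine tendsto_const_nhds.congr' ?_
    filter_upwards [eventually_gt_atTop m] with N hN
    rw [multichoose_neg_natCast_of_lt hN, zero_mul]
  · push Not at hs
    have hlim := ((Real.GammaSeq_tendsto_Gamma s).inv₀ (Real.Gamma_ne_zero hs)).mul
      (tendsto_natCast_div_add_atTop s)
    rw [mul_one] at hlim
    refine hlim.congr' ?_
    filter_upwards [eventually_gt_atTop 0] with N hN
    exact (multichoose_mul_rpow_eq_inv_GammaSeq_mul hN
      fun h ↦ hs N (eq_neg_of_add_eq_zero_right h)).symm

lemma abs_one_sub_mul_exp_le_one {u : ℝ} (hu : u ≤ 1) : |1 - u| * Real.exp u ≤ 1 := by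
  rw [abs_of_nonneg (sub_nonneg.2 hu), ← le_div_iff₀ (Real.exp_pos u), one_div, ← Real.exp_neg]
  exact Real.one_sub_le_exp_neg u

lemma abs_one_sub_mul_exp_le {u t : ℝ} (ht : 1 ≤ t) (hut : u ≤ t) :
    |1 - u| * Real.exp u ≤ t * Real.exp t := by
  rcases le_total u 1 with hu | hu
  · exact (abs_one_sub_mul_exp_le_one hu).trans
      (one_le_mul_of_one_le_of_one_le ht (Real.one_le_exp (zero_le_one.trans ht)))
  · rw [abs_of_nonpos (sub_nonpos.2 hu)]
    gcongr
    linarith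

lemma prod_abs_one_sub_div_mul_exp_le {τ T : ℝ} (hT : 0 ≤ T) (hτ : τ ≤ T) (N : ℕ) :
    ∏ j ∈ range N, |1 - τ / (j + 1)| * Real.exp (τ / (j + 1)) ≤
      ∏ j ∈ range ⌊T⌋₊, T / (j + 1) * Real.exp (T / (j + 1)) := by
  have hle (j : ℕ) : τ / (j + 1) ≤ T / (j + 1) := by gcongr
  have hone_le {j : ℕ} (hj : j < ⌊T⌋₊) : 1 ≤ T / (j + 1) := by
    rw [one_le_div (by positivity)]
    exact_mod_cast (Nat.le_floor_iff hT).1 hj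
  have hle_one {j : ℕ} (hj : ⌊T⌋₊ ≤ j) : T / (j + 1) ≤ 1 := by
    rw [div_le_one (by positivity)]
    exact_mod_cast ((Nat.floor_lt hT).1 (Nat.lt_succ_of_le hj)).le
  -- The exponential convergence factor makes every factor with `T ≤ j + 1` at most `1`.
  calc ∏ j ∈ range N, |1 - τ / (j + 1)| * Real.exp (τ / (j + 1))
      ≤ ∏ j ∈ range (min N ⌊T⌋₊), |1 - τ / (j + 1)| * Real.exp (τ / (j + 1)) := by
        refine prod_le_prod_of_subset_of_le_one (range_subset_range.2 (min_le_left _ _))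
          (fun j _ ↦ by positivity) fun j hjN hj ↦ ?_
        rw [mem_range] at hjN hj
        exact abs_one_sub_mul_exp_le_one ((hle j).trans (hle_one (by lia)))
    _ ≤ ∏ j ∈ range (min N ⌊T⌋₊), T / (j + 1) * Real.exp (T / (j + 1)) :=
        prod_le_prod (fun j _ ↦ by positivity) fun j hj ↦
          abs_one_sub_mul_exp_le (hone_le (lt_min_iff.1 (mem_range.1 hj)).2) (hle j)
    _ ≤ _ :=
        prod_le_prod_of_subset_of_one_le (range_subset_range.2 (min_le_right _ _))
          (fun j _ ↦ by positivity) fun j hj _ ↦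
            one_le_mul_of_one_le_of_one_le (hone_le (mem_range.1 hj))
              (Real.one_le_exp (by positivity))

lemma prod_exp_div_eq_exp_mul_harmonic (t : ℝ) (n : ℕ) :
    ∏ j ∈ range n, Real.exp (t / (j + 1)) = Real.exp (t * harmonic n) := by
  rw [← Real.exp_sum, harmonic]
  push_cast
  simp only [mul_sum, div_eq_mul_inv]

lemma prod_div_mul_exp_div_le {T : ℝ} (hT : 1 ≤ T) :
    ∏ j ∈ range ⌊T⌋₊, T / (j + 1) * Real.exp (T / (j + 1)) ≤
      Real.exp (2 * T + T * Real.log T) := by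
  have hT0 : 0 ≤ T := zero_le_one.trans hT
  have hprod : ∏ j ∈ range ⌊T⌋₊, T / ((j : ℝ) + 1) = T ^ ⌊T⌋₊ / (⌊T⌋₊.factorial : ℝ) := by
    rw [prod_div_distrib, prod_const, card_range, ← prod_range_add_one_eq_factorial]
    push_cast
    rfl
  calc ∏ j ∈ range ⌊T⌋₊, T / (j + 1) * Real.exp (T / (j + 1))
      = T ^ ⌊T⌋₊ / (⌊T⌋₊.factorial : ℝ) * Real.exp (T * harmonic ⌊T⌋₊) := by
        rw [prod_mul_distrib, hprod, prod_exp_div_eq_exp_mul_harmonic]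
    _ ≤ Real.exp T * Real.exp (T * (1 + Real.log T)) := by
        gcongr
        · exact Real.pow_div_factorial_le_exp T hT0 _
        · exact harmonic_floor_le_one_add_log T hT
    _ = Real.exp (2 * T + T * Real.log T) := by
        rw [← Real.exp_add]
        congr 1
        ring

lemma rpow_mul_exp_neg_mul_harmonic_le (τ : ℝ) {N : ℕ} (hN : 0 < N) :
    (N : ℝ) ^ τ * Real.exp (-(τ * harmonic N)) ≤ Real.exp |τ| := by
  have hN' : (0 : ℝ) < N := by exact_mod_cast hN
  have hlog : Real.log N ≤ harmonic N :=
    (Real.log_le_log hN' (by push_cast; linarith)).trans (log_add_one_le_harmonic N)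
  rw [Real.rpow_def_of_pos hN', ← Real.exp_add, Real.exp_le_exp]
  calc Real.log N * τ + -(τ * harmonic N) = -τ * (harmonic N - Real.log N) := by ring
    _ ≤ |τ| * (harmonic N - Real.log N) :=
        mul_le_mul_of_nonneg_right (neg_le_abs τ) (sub_nonneg.2 hlog)
    _ ≤ |τ| := mul_le_of_le_one_right (abs_nonneg τ)
        (by linarith [harmonic_le_one_add_log N])

lemma abs_multichoose_mul_rpow_le {s T : ℝ} (hT : 1 ≤ T) (hs : |1 - s| ≤ T) {N : ℕ} (hN : 0 < N) :
    |Ring.multichoose s N| * (N : ℝ) ^ (1 - s) ≤ Real.exp (3 * T + T * Real.log T) := by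
  set τ := 1 - s
  have hmultichoose : |Ring.multichoose s N| =
      (∏ j ∈ range N, |1 - τ / (j + 1)| * Real.exp (τ / (j + 1))) *
        Real.exp (-(τ * harmonic N)) := by
    rw [prod_mul_distrib, prod_exp_div_eq_exp_mul_harmonic, mul_assoc, ← Real.exp_add,
      add_neg_cancel, Real.exp_zero, mul_one, ← abs_prod, multichoose_eq_prod_one_sub_div]
  have hprod := (prod_abs_one_sub_div_mul_exp_le (zero_le_one.trans hT)
    ((le_abs_self τ).trans hs) N).trans (prod_div_mul_exp_div_le hT)
  calc |Ring.multichoose s N| * (N : ℝ) ^ τ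
      = (∏ j ∈ range N, |1 - τ / (j + 1)| * Real.exp (τ / (j + 1))) *
          ((N : ℝ) ^ τ * Real.exp (-(τ * harmonic N))) := by rw [hmultichoose]; ring
    _ ≤ Real.exp (2 * T + T * Real.log T) * Real.exp T := by
        gcongr
        exact (rpow_mul_exp_neg_mul_harmonic_le τ hN).trans (Real.exp_le_exp.2 hs)
    _ = Real.exp (3 * T + T * Real.log T) := by
        rw [← Real.exp_add]
        congr 1
        ring

end MultichooseAsymptotics

section WrightLimit

lemma summable_exp_mul_sub_mul_mul_log (D : ℝ) {c : ℝ} (hc : 0 < c) :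
    Summable fun k : ℕ ↦ Real.exp (D * k - c * (k * Real.log k)) := by
  have hgeom : Summable fun k : ℕ ↦ Real.exp (-1) ^ k :=
    summable_geometric_of_lt_one (Real.exp_pos _).le (Real.exp_lt_one_iff.2 neg_one_lt_zero)
  have hlog : Tendsto (fun k : ℕ ↦ c * Real.log k) atTop atTop :=
    (Real.tendsto_log_atTop.comp tendsto_natCast_atTop_atTop).const_mul_atTop hc
  refine .of_norm_bounded_eventually_nat hgeom ?_
  filter_upwards [hlog.eventually_ge_atTop (D + 1)] with k hk
  rw [Real.norm_of_nonneg (Real.exp_pos _).le, ← Real.exp_nat_mul, Real.exp_le_exp]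
  linear_combination mul_le_mul_of_nonneg_left hk k.cast_nonneg

lemma inv_factorial_le_exp (k : ℕ) :
    (k.factorial : ℝ)⁻¹ ≤ Real.exp (k - k * Real.log k) := by
  rcases k.eq_zero_or_pos with rfl | hk
  · simp
  have hpow : (k : ℝ) ^ k = Real.exp (k * Real.log k) := by
    rw [Real.exp_nat_mul, Real.exp_log (by exact_mod_cast hk)]
  rw [Real.exp_sub, ← hpow, le_div_iff₀ (by positivity), inv_mul_eq_div]
  exact Real.pow_div_factorial_le_exp k k.cast_nonneg k

lemma mul_add_mul_log_le {a b y : ℝ} (ha : 0 ≤ a) (hb : 1 ≤ b) (hy : 1 ≤ y) :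
    (a * y + b) * Real.log (a * y + b) ≤
      a * (y * Real.log y) + ((a + b) * Real.log (a + b) + b) * y := by
  have hle : a * y + b ≤ (a + b) * y := by nlinarith
  have hpos : 0 < a * y + b := by positivity
  have hlog : Real.log (a * y + b) ≤ Real.log (a + b) + Real.log y := by
    rw [← Real.log_mul (by positivity) (by positivity)]
    exact Real.log_le_log hpos hle
  have hlog_nonneg : 0 ≤ Real.log (a + b) := Real.log_nonneg (by linarith)
  calc (a * y + b) * Real.log (a * y + b)
      ≤ (a * y + b) * (Real.log (a + b) + Real.log y) := by gcongr
    _ = a * (y * Real.log y) + (a * y + b) * Real.log (a + b) + b * Real.log y := by ring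
    _ ≤ a * (y * Real.log y) + (a + b) * y * Real.log (a + b) + b * y := by
        gcongr
        exact Real.log_le_self (by positivity)
    _ = _ := by ring

lemma summable_pow_div_factorial_mul_exp {a b x : ℝ} (ha : 0 ≤ a) (ha1 : a < 1) (hb : 1 ≤ b)
    (hx : 0 ≤ x) (c : ℝ) :
    Summable fun k : ℕ ↦ x ^ k / k.factorial *
      Real.exp (c * (a * k + b) + (a * k + b) * Real.log (a * k + b)) := by
  set D := x + 1 + c * a + ((a + b) * Real.log (a + b) + b)
  refine .of_norm_bounded_eventually_nat
    ((summable_exp_mul_sub_mul_mul_log D (sub_pos.2 ha1)).mul_left (Real.exp (c * b))) ?_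
  filter_upwards [eventually_ge_atTop 1] with k hk
  have hpow : x ^ k ≤ Real.exp (x * k) := by
    rw [mul_comm, Real.exp_nat_mul]
    gcongr
    linarith [Real.add_one_le_exp x]
  have hlog := mul_add_mul_log_le ha hb (Nat.one_le_cast.2 hk)
  rw [Real.norm_of_nonneg (by positivity), div_eq_mul_inv]
  calc x ^ k * (k.factorial : ℝ)⁻¹ *
        Real.exp (c * (a * k + b) + (a * k + b) * Real.log (a * k + b))
      ≤ Real.exp (x * k) * Real.exp (k - k * Real.log k) *
          Real.exp (c * (a * k + b) + (a * k + b) * Real.log (a * k + b)) := by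
        gcongr
        exact inv_factorial_le_exp k
    _ ≤ Real.exp (c * b) * Real.exp (D * k - (1 - a) * (k * Real.log k)) := by
        rw [← Real.exp_add, ← Real.exp_add, ← Real.exp_add, Real.exp_le_exp]
        linear_combination hlog

lemma tendsto_choose_div_pow {ι : Type*} {l : Filter ι} {a : ι → ℕ} {y : ι → ℝ} {x : ℝ}
    (hy : Tendsto y l atTop) (ha : Tendsto (fun i ↦ a i / y i) l (𝓝 x)) (k : ℕ) :
    Tendsto (fun i ↦ (a i).choose k / y i ^ k) l (𝓝 (x ^ k / k.factorial)) := by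
  have hfactor (j : ℕ) : Tendsto (fun i ↦ (a i - j) / y i) l (𝓝 x) := by
    simpa only [sub_div, sub_zero] using ha.sub (tendsto_const_nhds.div_atTop hy)
  have hprod := (tendsto_finsetProd (range k) fun j _ ↦ hfactor j).div_const (k.factorial : ℝ)
  rw [prod_const, card_range] at hprod
  refine hprod.congr fun i ↦ ?_
  rw [Nat.cast_choose_eq_descPochhammer_div, descPochhammer_eval_eq_prod_range, prod_div_distrib,
    prod_const, card_range, div_right_comm]

lemma discreteWright_eq_sum (α : ℝ) (N n : ℕ) (s : ℝ) :
    discreteWright α N n s =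
      ∑ k ∈ range (n + 1), (-1) ^ k * n.choose k * Ring.multichoose (s - α * k) N := by
  have hseries : sibuyaSeries α ^ n * negBinomialSeries s =
      ∑ k ∈ range (n + 1), C ((-1) ^ k * (n.choose k : ℝ)) * negBinomialSeries (s - α * k) := by
    rw [sibuyaSeries, sub_eq_neg_add, add_pow, sum_mul]
    refine sum_congr rfl fun k _ ↦ ?_
    rw [neg_pow, negBinomialSeries.pow, show s - α * k = k * -α + s by ring, negBinomialSeries.add]
    simp only [one_pow, map_mul, map_pow, map_neg, map_one, map_natCast]
    ring
  simp only [discreteWright, hseries, map_sum, coeff_C_mul, negBinomialSeries.coeff_eq_multichoose]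

/-- The `k`-th term of the expansion of `discreteWright α N ⌊x * N ^ α⌋₊ s * N ^ (1 - s)`, with the
power of `N` distributed so that each factor converges. -/
noncomputable def discreteWrightTerm (α s x : ℝ) (N k : ℕ) : ℝ :=
  (-1) ^ k * (⌊x * (N : ℝ) ^ α⌋₊.choose k / ((N : ℝ) ^ α) ^ k) *
    (Ring.multichoose (s - α * k) N * (N : ℝ) ^ (1 - (s - α * k)))

variable {α x : ℝ}

lemma tendsto_discreteWrightTerm (hα : 0 < α) (s : ℝ) (hx : 0 ≤ x) (k : ℕ) :
    Tendsto (discreteWrightTerm α s x · k) atTop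
      (𝓝 ((-x) ^ k / (k.factorial * Real.Gamma (s + -α * k)))) := by
  have hpow : Tendsto (fun N : ℕ ↦ (N : ℝ) ^ α) atTop atTop :=
    (tendsto_rpow_atTop hα).comp tendsto_natCast_atTop_atTop
  have hchoose := tendsto_choose_div_pow hpow ((tendsto_nat_floor_mul_div_atTop hx).comp hpow) k
  have hterm : (-x) ^ k / (k.factorial * Real.Gamma (s + -α * k)) =
      (-1) ^ k * (x ^ k / k.factorial) * (Real.Gamma (s - α * k))⁻¹ := by
    rw [neg_pow, neg_mul, ← sub_eq_add_neg, ← div_div, mul_div_assoc, div_eq_mul_inv]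
  rw [hterm]
  exact (hchoose.const_mul ((-1) ^ k)).mul (tendsto_multichoose_mul_rpow (s - α * k))

lemma norm_discreteWrightTerm_le (hα : 0 ≤ α) (s : ℝ) (hx : 0 ≤ x) {N : ℕ} (hN : 0 < N) (k : ℕ) :
    ‖discreteWrightTerm α s x N k‖ ≤ x ^ k / k.factorial *
      Real.exp (3 * (α * k + (|1 - s| + 1)) +
        (α * k + (|1 - s| + 1)) * Real.log (α * k + (|1 - s| + 1))) := by
  have hk : 0 ≤ α * k := by positivity
  have hchoose : (⌊x * (N : ℝ) ^ α⌋₊.choose k : ℝ) / ((N : ℝ) ^ α) ^ k ≤ x ^ k / k.factorial := by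
    rw [div_le_iff₀ (by positivity)]
    calc (⌊x * (N : ℝ) ^ α⌋₊.choose k : ℝ) ≤ (⌊x * (N : ℝ) ^ α⌋₊ : ℝ) ^ k / k.factorial :=
          Nat.choose_le_pow_div k _
      _ ≤ (x * (N : ℝ) ^ α) ^ k / k.factorial := by
          gcongr
          exact Nat.floor_le (by positivity)
      _ = x ^ k / k.factorial * ((N : ℝ) ^ α) ^ k := by ring
  have hT : |1 - (s - α * k)| ≤ α * k + (|1 - s| + 1) := by
    rw [sub_sub_eq_add_sub, add_sub_right_comm]
    linarith [abs_add_le (1 - s) (α * k), abs_of_nonneg hk]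
  rw [discreteWrightTerm, norm_mul, norm_mul, norm_mul, norm_pow, norm_neg, norm_one, one_pow,
    one_mul, Real.norm_of_nonneg (by positivity), Real.norm_eq_abs (Ring.multichoose _ _),
    Real.norm_of_nonneg (Real.rpow_nonneg N.cast_nonneg _)]
  gcongr
  exact abs_multichoose_mul_rpow_le (by linarith [abs_nonneg (1 - s)]) hT hN

lemma tsum_discreteWrightTerm (α s x : ℝ) {N : ℕ} (hN : 0 < N) :
    ∑' k, discreteWrightTerm α s x N k =
      discreteWright α N ⌊x * (N : ℝ) ^ α⌋₊ s * (N : ℝ) ^ (1 - s) := by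
  have hN' : (0 : ℝ) < N := by exact_mod_cast hN
  rw [discreteWright_eq_sum, sum_mul, tsum_eq_sum (s := range (⌊x * (N : ℝ) ^ α⌋₊ + 1))]
  · refine sum_congr rfl fun k _ ↦ ?_
    have hpow : (N : ℝ) ^ (1 - (s - α * k)) = (N : ℝ) ^ (1 - s) * ((N : ℝ) ^ α) ^ k := by
      rw [← Real.rpow_mul_natCast hN'.le, ← Real.rpow_add hN']
      congr 1
      ring
    rw [discreteWrightTerm, hpow]
    field_simp
  · intro k hk
    rw [mem_range, Nat.lt_succ_iff, not_le] at hk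
    simp [discreteWrightTerm, Nat.choose_eq_zero_of_lt hk]

theorem tendsto_discreteWright (h0 : 0 < α) (h1 : α < 1) (s : ℝ) (hx : 0 ≤ x) :
    Tendsto (fun N : ℕ ↦ discreteWright α N ⌊x * (N : ℝ) ^ α⌋₊ s * (N : ℝ) ^ (1 - s)) atTop
      (𝓝 (wright (-α) s (-x))) := by
  have hlim : Tendsto (fun N ↦ ∑' k, discreteWrightTerm α s x N k) atTop
      (𝓝 (wright (-α) s (-x))) := by
    refine tendsto_tsum_of_dominated_convergence
      (summable_pow_div_factorial_mul_exp (b := |1 - s| + 1) h0.le h1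
        (le_add_of_nonneg_left (abs_nonneg _)) hx 3)
      (tendsto_discreteWrightTerm h0 s hx) ?_
    filter_upwards [eventually_gt_atTop 0] with N hN
    exact norm_discreteWrightTerm_le h0.le s hx hN
  refine hlim.congr' ?_
  filter_upwards [eventually_gt_atTop 0] with N hN
  exact tsum_discreteWrightTerm α s x hN

end WrightLimit

/-- Turán-type inequality for the Wright function: for `α ∈ (0,1)`, `β ≥ 0` and
`x ≥ 0`, `φ(-α, β+α, -x) · φ(-α, β-α, -x) ≤ φ(-α, β, -x)²`. -/
theorem wright_turan (α β x : ℝ) (hα : α ∈ Set.Ioo (0 : ℝ) 1) (hβ : 0 ≤ β)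
    (hx : 0 ≤ x) :
    wright (-α) (β + α) (-x) * wright (-α) (β - α) (-x) ≤ wright (-α) β (-x) ^ 2 := by
  obtain ⟨h0, h1⟩ := hα
  have hlim (s : ℝ) := tendsto_discreteWright h0 h1 s hx
  refine le_of_tendsto_of_tendsto ((hlim (β + α)).mul (hlim (β - α))) ((hlim β).pow 2) ?_
  filter_upwards [eventually_gt_atTop 0] with N hN
  have hN' : (0 : ℝ) < N := by exact_mod_cast hN
  have hpow : (N : ℝ) ^ (1 - (β + α)) * (N : ℝ) ^ (1 - (β - α)) = ((N : ℝ) ^ (1 - β)) ^ 2 := by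
    rw [sq, ← Real.rpow_add hN', ← Real.rpow_add hN']
    congr 1
    ring
  rw [mul_mul_mul_comm, hpow, mul_pow]
  exact mul_le_mul_of_nonneg_right (discreteWright_turan h0 h1 hβ N _) (sq_nonneg _)
end
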